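/- arXiv:1803.03588 — 3 statements merged into one kernel-verified Lean document; each statement's English description precedes it below -/
import Mathlib

section
/- There exists a constant c > 0 such that every C₅-free graph G with n > 1 vertices satisfies max(α(G), ω(G)) ≥ 2^{c·√(log n · log log n)}. -/
open SimpleGraph

/-- `G` is `C₅`-free: no induced subgraph of `G` is isomorphic to the 5-cycle. -/
def C5Free {V : Type} (G : SimpleGraph V) : Prop :=
  ¬ Nonempty (cycleGraph 5 ↪g G)

/-!
Write `f(U) = α(G[U]) · ω(G[U])` for a set `U` of vertices. The function `f` is superadditive over
disjoint unions and over joins. Suppose `α` and `ω` are both at most `2 ^ k ^ 2`. The aim is to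
show that `f` grows by a factor `k` whenever the number of vertices grows by a factor
`2 ^ O(k ^ 2)`. Iterating this `t` times, a graph on `2 ^ O(k ^ 2 t)` vertices has `k ^ t ≤ f`,
whereas `f ≤ 2 ^ (2 k ^ 2)`, so `t log k ≤ 2 k ^ 2`. Choosing `k ^ 2` of order
`√(log n · log log n)` and `t` of order `log n / k ^ 2` gives a contradiction.

For the growth step, the Fox–Sudakov argument for graphs without a fixed induced subgraph first
passes to a set in which `G` or its complement is sparse, and `C₅` is self-complementary, so let
it be `G`. In a sparse set `R` one of two things happens.

* A large set `A` has many vertices outside it with few neighbours in `A`. A maximum stable set of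
  these vertices leaves at least half of `A` uncovered, so `f` splits additively; this is repeated
  up to `k` times.
* There is a vertex `v` and a comb: neighbours `a` of `v` together with large sets `P a` of
  non-neighbours of `v`, where `a` is the only base vertex with neighbours in `P a`. By Ramsey's
  theorem the base contains a large stable set or a large clique. If it is stable, distinct `P a`
  are anticomplete, since `v - a₁ - b₁ - b₂ - a₂` is not an induced `C₅`. If it is a clique, some
  vertex `y` without neighbours in it has many neighbours in most of the `P a`, and these
  neighbourhoods are pairwise complete, since `y - b₁ - a₁ - a₂ - b₂` is not an induced `C₅`.
-/

namespace ErdosHajnal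

open Finset

variable {V : Type*} {G : SimpleGraph V}

section Nbrs

variable {v w : V} {A B : Finset V}

open Classical in
/-- The neighbours of `v` that lie in the finite set `A`. -/
noncomputable def nbrs (G : SimpleGraph V) (v : V) (A : Finset V) : Finset V :=
  {w ∈ A | G.Adj v w}

lemma mem_nbrs : w ∈ nbrs G v A ↔ w ∈ A ∧ G.Adj v w := by
  classical exact mem_filter

lemma nbrs_subset (v : V) (A : Finset V) : nbrs G v A ⊆ A :=
  fun _ hw ↦ (mem_nbrs.1 hw).1

lemma nbrs_mono (v : V) (h : A ⊆ B) : nbrs G v A ⊆ nbrs G v B :=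
  fun _ hw ↦ mem_nbrs.2 ⟨h (mem_nbrs.1 hw).1, (mem_nbrs.1 hw).2⟩

lemma sum_card_nbrs_comm (G : SimpleGraph V) (A B : Finset V) :
    ∑ a ∈ A, #(nbrs G a B) = ∑ b ∈ B, #(nbrs G b A) := by
  classical
  simpa [bipartiteAbove, bipartiteBelow, nbrs, G.adj_comm] using
    sum_card_bipartiteAbove_eq_sum_card_bipartiteBelow (s := A) (t := B) G.Adj

lemma card_nbrs_add_card_nbrs_compl (G : SimpleGraph V) (hv : v ∈ A) :
    #(nbrs G v A) + #(nbrs Gᶜ v A) + 1 = #A := by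
  classical
  have hcompl : nbrs Gᶜ v A = {w ∈ A.erase v | ¬ G.Adj v w} := by
    ext w
    simp only [mem_nbrs, compl_adj, mem_filter, mem_erase]
    tauto
  have hself : nbrs G v A = {w ∈ A.erase v | G.Adj v w} := by
    ext w
    simp only [mem_nbrs, mem_filter, mem_erase]
    exact ⟨fun h ↦ ⟨⟨h.2.ne', h.1⟩, h.2⟩, fun h ↦ ⟨h.1.2, h.2⟩⟩
  rw [hcompl, hself, card_filter_add_card_filter_not, card_erase_add_one hv]

end Nbrs

section Averaging

variable {ι κ : Type*}

lemma card_le_two_mul_card_filter_le_two_mul {s : Finset ι} {f : ι → ℕ} {μ : ℕ}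
    (h : ∑ i ∈ s, f i ≤ #s * μ) : #s ≤ 2 * #{i ∈ s | f i ≤ 2 * μ} := by
  have hlarge : #{i ∈ s | ¬ f i ≤ 2 * μ} * (2 * μ + 1) ≤ #s * μ :=
    calc #{i ∈ s | ¬ f i ≤ 2 * μ} * (2 * μ + 1)
        ≤ ∑ i ∈ s with ¬ f i ≤ 2 * μ, f i := by
          rw [← smul_eq_mul]
          exact card_nsmul_le_sum _ _ _ fun i hi ↦ Nat.lt_of_not_le (mem_filter.1 hi).2
      _ ≤ ∑ i ∈ s, f i := sum_le_sum_of_subset (filter_subset _ _)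
      _ ≤ #s * μ := h
  have hsplit := card_filter_add_card_filter_not (s := s) (fun i ↦ f i ≤ 2 * μ)
  nlinarith

lemma exists_two_mul_card_filter_le {s : Finset ι} {t : Finset κ} (ht : t.Nonempty)
    (r : ι → κ → Prop) [∀ i j, Decidable (r i j)] (h : ∀ i ∈ s, 2 * #{j ∈ t | r i j} ≤ #t) :
    ∃ j ∈ t, 2 * #{i ∈ s | r i j} ≤ #s := by
  by_contra! hlarge
  have hcount : ∑ i ∈ s, #{j ∈ t | r i j} = ∑ j ∈ t, #{i ∈ s | r i j} :=
    sum_card_bipartiteAbove_eq_sum_card_bipartiteBelow r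
  have hupper : ∑ i ∈ s, 2 * #{j ∈ t | r i j} ≤ #s * #t := sum_le_card_nsmul s _ _ h
  have hlower : ∑ _j ∈ t, #s < ∑ j ∈ t, 2 * #{i ∈ s | r i j} := sum_lt_sum_of_nonempty ht hlarge
  rw [← mul_sum] at hupper hlower
  rw [sum_const, smul_eq_mul, mul_comm] at hlower
  omega

end Averaging

section CliqueNum

variable {S U U' Z A R : Finset V}

/-- The clique number of the subgraph of `G` induced on the finite set `U`; the stability number
of that subgraph is `cliqueNumOn Gᶜ U`. -/
noncomputable def cliqueNumOn (G : SimpleGraph V) (U : Finset V) : ℕ :=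
  (G.induce (U : Set V)).cliqueNum

lemma card_le_cliqueNumOn (hSU : S ⊆ U) (hS : G.IsClique S) : #S ≤ cliqueNumOn G U := by
  classical
  have hclique : (G.induce (U : Set V)).IsClique (S.subtype (· ∈ (U : Set V))) :=
    fun a ha b hb hab ↦ hS (mem_subtype.1 ha) (mem_subtype.1 hb) (Subtype.coe_ne_coe.2 hab)
  calc #S = #(S.subtype (· ∈ (U : Set V))) := by
        rw [card_subtype, filter_true_of_mem fun a ha ↦ mem_coe.2 (hSU ha)]
    _ ≤ cliqueNumOn G U := hclique.card_le_cliqueNum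

lemma exists_isClique_card_eq_cliqueNumOn (G : SimpleGraph V) (U : Finset V) :
    ∃ S ⊆ U, G.IsClique S ∧ #S = cliqueNumOn G U := by
  obtain ⟨S, hS⟩ := (G.induce (U : Set V)).exists_isNClique_cliqueNum
  refine ⟨S.map (.subtype _), fun a ha ↦ ?_, ?_, by rw [card_map, hS.card_eq, cliqueNumOn]⟩
  · obtain ⟨b, -, rfl⟩ := mem_map.1 ha
    exact b.2
  · rw [coe_map]
    rintro _ ⟨a, ha, rfl⟩ _ ⟨b, hb, rfl⟩ hab
    exact hS.isClique ha hb fun h ↦ hab (congrArg _ h)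

lemma cliqueNumOn_mono (G : SimpleGraph V) (h : U ⊆ U') : cliqueNumOn G U ≤ cliqueNumOn G U' := by
  obtain ⟨S, hSU, hS, hcard⟩ := exists_isClique_card_eq_cliqueNumOn G U
  exact hcard ▸ card_le_cliqueNumOn (hSU.trans h) hS

lemma cliqueNumOn_pos (G : SimpleGraph V) (h : U.Nonempty) : 0 < cliqueNumOn G U := by
  obtain ⟨v, hv⟩ := h
  exact card_le_cliqueNumOn (S := {v}) (by simpa using hv) (by simp)

lemma cliqueNumOn_add_le (hZ : Z ⊆ R) (hA : A ⊆ R) (hSZ : S ⊆ Z) (hS : G.IsClique S)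
    (hcard : #S = cliqueNumOn G Z) (hSA : G.IsCompleteBetween S A) :
    cliqueNumOn G Z + cliqueNumOn G A ≤ cliqueNumOn G R := by
  classical
  obtain ⟨T, hTA, hT, hTcard⟩ := exists_isClique_card_eq_cliqueNumOn G A
  have hST : Disjoint S T := by
    exact_mod_cast hSA.disjoint.mono_right (coe_subset.2 hTA)
  rw [← hcard, ← hTcard, ← card_union_of_disjoint hST]
  refine card_le_cliqueNumOn (union_subset (hSZ.trans hZ) (hTA.trans hA)) ?_
  rw [coe_union, isClique_iff, Set.pairwise_union]
  exact ⟨hS, hT, fun a ha b hb _ ↦ ⟨hSA ha (hTA hb), (hSA ha (hTA hb)).symm⟩⟩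

/-- The product `α(G[U]) * ω(G[U])`. It is invariant under complementation and superadditive both
over disjoint unions and over joins. -/
noncomputable def alphaOmega (G : SimpleGraph V) (U : Finset V) : ℕ :=
  cliqueNumOn Gᶜ U * cliqueNumOn G U

lemma alphaOmega_compl (G : SimpleGraph V) (U : Finset V) : alphaOmega Gᶜ U = alphaOmega G U := by
  rw [alphaOmega, alphaOmega, compl_compl, mul_comm]

lemma alphaOmega_mono (G : SimpleGraph V) (h : U ⊆ U') : alphaOmega G U ≤ alphaOmega G U' :=
  Nat.mul_le_mul (cliqueNumOn_mono _ h) (cliqueNumOn_mono _ h)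

lemma alphaOmega_pos (G : SimpleGraph V) (h : U.Nonempty) : 0 < alphaOmega G U :=
  Nat.mul_pos (cliqueNumOn_pos _ h) (cliqueNumOn_pos _ h)

lemma alphaOmega_add_le (hZ : Z ⊆ R) (hA : A ⊆ R) (hSZ : S ⊆ Z) (hS : G.IsClique S)
    (hcard : #S = cliqueNumOn G Z) (hSA : G.IsCompleteBetween S A) :
    alphaOmega G Z + alphaOmega G A ≤ alphaOmega G R :=
  calc alphaOmega G Z + alphaOmega G A
      ≤ cliqueNumOn Gᶜ R * cliqueNumOn G Z + cliqueNumOn Gᶜ R * cliqueNumOn G A := by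
        gcongr <;> exact Nat.mul_le_mul_right _ (cliqueNumOn_mono _ ‹_›)
    _ = cliqueNumOn Gᶜ R * (cliqueNumOn G Z + cliqueNumOn G A) := (mul_add ..).symm
    _ ≤ alphaOmega G R := Nat.mul_le_mul_left _ (cliqueNumOn_add_le hZ hA hSZ hS hcard hSA)

lemma sum_alphaOmega_le [DecidableEq V] {ι : Type*} (T : Finset ι) (B : ι → Finset V)
    (hB : ∀ i ∈ T, ∀ j ∈ T, i ≠ j → G.IsCompleteBetween (B i) (B j)) :
    ∑ i ∈ T, alphaOmega G (B i) ≤ alphaOmega G (T.biUnion B) := by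
  classical
  induction T using Finset.induction_on with
  | empty => simp
  | insert i T hi ih =>
    rw [sum_insert hi, biUnion_insert]
    obtain ⟨S, hSB, hS, hcard⟩ := exists_isClique_card_eq_cliqueNumOn G (B i)
    have hcomplete : G.IsCompleteBetween S (T.biUnion B) := by
      intro s hs b hb
      obtain ⟨j, hj, hbj⟩ := mem_biUnion.1 hb
      exact hB i (mem_insert_self i T) j (mem_insert_of_mem hj) (fun h ↦ hi (h ▸ hj)) (hSB hs) hbj
    have hrest := ih fun j hj l hl ↦ hB j (mem_insert_of_mem hj) l (mem_insert_of_mem hl)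
    exact (Nat.add_le_add_left hrest _).trans <|
      alphaOmega_add_le subset_union_left subset_union_right hSB hS hcard hcomplete

lemma two_le_max_cliqueNum [Finite V] [Nontrivial V] (G : SimpleGraph V) :
    2 ≤ max Gᶜ.cliqueNum G.cliqueNum := by
  classical
  have two_le_of_adj : ∀ {H : SimpleGraph V} {v w : V}, H.Adj v w → 2 ≤ H.cliqueNum := by
    intro H v w hvw
    have hclique : H.IsClique ({v, w} : Finset V) := by simp [hvw]
    simpa [Finset.card_pair hvw.ne] using hclique.card_le_cliqueNum
  obtain ⟨v, w, hne⟩ := exists_pair_ne V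
  by_cases hvw : G.Adj v w
  · exact le_max_of_le_right (two_le_of_adj hvw)
  · exact le_max_of_le_left (two_le_of_adj ((compl_adj ..).2 ⟨hne, hvw⟩))

end CliqueNum

section Ramsey

lemma exists_isClique_card_succ {v : V} {S T : Finset V} (hv : v ∈ S) (hTS : T ⊆ nbrs G v S)
    (hT : G.IsClique T) : ∃ T' ⊆ S, #T' = #T + 1 ∧ G.IsClique T' := by
  classical
  have hadj : ∀ w ∈ T, G.Adj v w := fun w hw ↦ (mem_nbrs.1 (hTS hw)).2
  refine ⟨insert v T, insert_subset hv (hTS.trans (nbrs_subset v S)),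
    card_insert_of_notMem fun h ↦ (hadj v h).ne rfl, ?_⟩
  rw [coe_insert]
  exact hT.insert fun w hw _ ↦ hadj w hw

theorem exists_isClique_or_exists_isClique_compl (G : SimpleGraph V) {s t : ℕ} {S : Finset V}
    (hS : (s + t).choose s ≤ #S) :
    (∃ T ⊆ S, #T = s ∧ G.IsClique T) ∨ ∃ T ⊆ S, #T = t ∧ Gᶜ.IsClique T := by
  induction s generalizing t S with
  | zero => exact .inl ⟨∅, by simp, by simp, by simp⟩
  | succ s ihs =>
    induction t generalizing S with
    | zero => exact .inr ⟨∅, by simp, by simp, by simp⟩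
    | succ t iht =>
      have hpascal : (s + 1 + (t + 1)).choose (s + 1) =
          (s + (t + 1)).choose s + (s + 1 + t).choose (s + 1) := by
        rw [show s + 1 + (t + 1) = s + (t + 1) + 1 by ring, Nat.choose_succ_succ,
          show s + (t + 1) = s + 1 + t by ring]
      have hpos : 0 < (s + (t + 1)).choose s := Nat.choose_pos (by omega)
      obtain ⟨v, hv⟩ : S.Nonempty := card_pos.1 (by omega)
      have hdeg := card_nbrs_add_card_nbrs_compl G hv
      obtain hG | hGc : (s + (t + 1)).choose s ≤ #(nbrs G v S) ∨
          (s + 1 + t).choose (s + 1) ≤ #(nbrs Gᶜ v S) := by omega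
      · obtain ⟨T, hTS, rfl, hT⟩ | ⟨T, hTS, hT⟩ := ihs hG
        · exact .inl (exists_isClique_card_succ hv hTS hT)
        · exact .inr ⟨T, hTS.trans (nbrs_subset v S), hT⟩
      · obtain ⟨T, hTS, hT⟩ | ⟨T, hTS, rfl, hT⟩ := iht hGc
        · exact .inl ⟨T, hTS.trans (nbrs_subset v S), hT⟩
        · exact .inr (exists_isClique_card_succ hv hTS hT)

end Ramsey

section Comb

variable {S A B U : Finset V} {K : ℕ}

open Classical in
/-- The vertices of `B` without a neighbour in `S`. -/
noncomputable def uncovered (G : SimpleGraph V) (S B : Finset V) : Finset V :=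
  {b ∈ B | ∀ a ∈ S, ¬ G.Adj a b}

lemma mem_uncovered {b : V} : b ∈ uncovered G S B ↔ b ∈ B ∧ ∀ a ∈ S, ¬ G.Adj a b := by
  classical exact mem_filter

lemma uncovered_subset (S B : Finset V) : uncovered G S B ⊆ B :=
  fun _ hb ↦ (mem_uncovered.1 hb).1

lemma card_uncovered_insert_add_card_nbrs [DecidableEq V] (a : V) (S B : Finset V) :
    #(uncovered G (insert a S) B) + #(nbrs G a (uncovered G S B)) = #(uncovered G S B) := by
  classical
  have hinsert : uncovered G (insert a S) B = {b ∈ uncovered G S B | ¬ G.Adj a b} := by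
    ext b
    simp only [mem_uncovered, mem_filter, forall_mem_insert]
    tauto
  rw [hinsert, add_comm, nbrs, card_filter_add_card_filter_not]

lemma card_le_card_uncovered_add_sum_card_nbrs (G : SimpleGraph V) (S B : Finset V) :
    #B ≤ #(uncovered G S B) + ∑ a ∈ S, #(nbrs G a B) := by
  classical
  induction S using Finset.induction_on with
  | empty => simp [uncovered]
  | insert a S ha ih =>
    have hstep := card_uncovered_insert_add_card_nbrs (G := G) a S B
    have hmono : #(nbrs G a (uncovered G S B)) ≤ #(nbrs G a B) :=
      card_le_card (nbrs_mono a (uncovered_subset S B))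
    rw [sum_insert ha]
    omega

lemma card_le_card_uncovered_add_card_mul {D : ℕ} (hD : ∀ a ∈ S, #(nbrs G a B) ≤ D) :
    #B ≤ #(uncovered G S B) + #S * D :=
  (card_le_card_uncovered_add_sum_card_nbrs G S B).trans <|
    Nat.add_le_add_left (sum_le_card_nsmul _ _ _ hD) _

/-- A comb with base `S` and teeth `P a` for `a ∈ S`: each vertex of `P a` has `a` as its only
neighbour in `S`. -/
def IsComb (G : SimpleGraph V) (S : Finset V) (P : V → Finset V) : Prop :=
  ∀ a ∈ S, ∀ b ∈ P a, ∀ a' ∈ S, (G.Adj a' b ↔ a' = a)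

lemma IsComb.mono {P Q : V → Finset V} (h : IsComb G S P) (hAS : A ⊆ S)
    (hQP : ∀ a ∈ A, Q a ⊆ P a) : IsComb G A Q :=
  fun a ha b hb a' ha' ↦ h a (hAS ha) b (hQP a ha hb) a' (hAS ha')

theorem exists_isComb {l : ℕ} (hA : A.Nonempty) (hB : ∀ b ∈ B, #A ≤ K * #(nbrs G b A)) :
    ∃ S ⊆ A, ∃ P : V → Finset V, IsComb G S P ∧ (∀ a ∈ S, P a ⊆ B ∧ l ≤ #(P a)) ∧
      #(uncovered G S B) ≤ K * l := by
  classical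
  -- A minimiser `S` of this potential gains from no deletion and no insertion of a vertex.
  obtain ⟨S, hSA, hmin⟩ := exists_min_image A.powerset
    (fun S ↦ #(uncovered G S B) + l * #S) ⟨∅, empty_mem_powerset A⟩
  rw [mem_powerset] at hSA
  refine ⟨S, hSA, fun a ↦ nbrs G a (uncovered G (S.erase a) B), fun a _ b hb a' ha' ↦ ?_,
    fun a ha ↦ ⟨(nbrs_subset _ _).trans (uncovered_subset _ _), ?_⟩, ?_⟩
  · obtain ⟨hbU, hab⟩ := mem_nbrs.1 hb
    refine ⟨fun h ↦ ?_, fun h ↦ h ▸ hab⟩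
    by_contra hne
    exact (mem_uncovered.1 hbU).2 a' (mem_erase.2 ⟨hne, ha'⟩) h
  · have herase := hmin (S.erase a) (mem_powerset.2 ((erase_subset a S).trans hSA))
    have hsplit := card_uncovered_insert_add_card_nbrs (G := G) a (S.erase a) B
    rw [insert_erase ha] at hsplit
    simp only [← card_erase_add_one ha, mul_add, mul_one] at herase
    change l ≤ #(nbrs G a (uncovered G (S.erase a) B))
    omega
  · have hdeg : ∀ a ∈ A, #(nbrs G a (uncovered G S B)) ≤ l := by
      intro a ha
      have hinsert := hmin (insert a S) (mem_powerset.2 (insert_subset ha hSA))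
      have hsplit := card_uncovered_insert_add_card_nbrs (G := G) a S B
      have hcard : l * #(insert a S) ≤ l * (#S + 1) := Nat.mul_le_mul_left l (card_insert_le a S)
      rw [mul_add, mul_one] at hcard
      omega
    refine Nat.le_of_mul_le_mul_right (c := #A) ?_ hA.card_pos
    calc #(uncovered G S B) * #A
        ≤ ∑ b ∈ uncovered G S B, K * #(nbrs G b A) := by
          rw [← smul_eq_mul]
          exact card_nsmul_le_sum _ _ _ fun b hb ↦ hB b (uncovered_subset S B hb)
      _ = K * ∑ a ∈ A, #(nbrs G a (uncovered G S B)) := by rw [← mul_sum, sum_card_nbrs_comm]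
      _ ≤ K * (#A * l) := Nat.mul_le_mul_left K (sum_le_card_nsmul _ _ _ hdeg)
      _ = K * l * #A := by ring

end Comb

section SparseTo

variable {R A : Finset V} {K : ℕ}

open Classical in
/-- The vertices of `R` outside `A` that are adjacent to at most a `1 / K` fraction of `A`. -/
noncomputable def sparseTo (G : SimpleGraph V) (K : ℕ) (R A : Finset V) : Finset V :=
  {v ∈ R \ A | K * #(nbrs G v A) ≤ #A}

lemma mem_sparseTo {v : V} :
    v ∈ sparseTo G K R A ↔ (v ∈ R ∧ v ∉ A) ∧ K * #(nbrs G v A) ≤ #A := by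
  classical rw [sparseTo, mem_filter, mem_sdiff]

lemma sparseTo_subset (G : SimpleGraph V) (K : ℕ) (R A : Finset V) : sparseTo G K R A ⊆ R :=
  fun _ hv ↦ (mem_sparseTo.1 hv).1.1

lemma exists_alphaOmega_add_le {M : ℕ} (hM : 0 < M)
    (hα : ∀ S : Finset V, Gᶜ.IsClique S → #S ≤ M) (hA : A ⊆ R) :
    ∃ A' ⊆ A, #A ≤ 2 * #A' ∧
      alphaOmega G (sparseTo G (2 * M) R A) + alphaOmega G A' ≤ alphaOmega G R := by
  obtain ⟨S, hSZ, hS, hcard⟩ := exists_isClique_card_eq_cliqueNumOn Gᶜ (sparseTo G (2 * M) R A)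
  refine ⟨uncovered G S A, uncovered_subset S A, ?_, ?_⟩
  · have hcover := card_le_card_uncovered_add_sum_card_nbrs G S A
    have hdeg : M * (2 * ∑ a ∈ S, #(nbrs G a A)) ≤ M * #A :=
      calc M * (2 * ∑ a ∈ S, #(nbrs G a A)) = ∑ a ∈ S, 2 * M * #(nbrs G a A) := by
            rw [← mul_sum]; ring
        _ ≤ #S * #A := sum_le_card_nsmul _ _ _ fun a ha ↦ (mem_sparseTo.1 (hSZ ha)).2
        _ ≤ M * #A := Nat.mul_le_mul_right _ (hα S hS)
    have := Nat.le_of_mul_le_mul_left hdeg hM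
    omega
  · rw [← alphaOmega_compl G, ← alphaOmega_compl G, ← alphaOmega_compl G]
    refine alphaOmega_add_le (sparseTo_subset _ _ _ _) ((uncovered_subset S A).trans hA) hSZ hS
      hcard fun s hs a ha ↦ ?_
    obtain ⟨haA, hna⟩ := mem_uncovered.1 ha
    rw [compl_adj]
    exact ⟨fun h ↦ (mem_sparseTo.1 (hSZ hs)).1.2 (h ▸ haA), hna s hs⟩

end SparseTo

section Dense

variable {R T : Finset V} {P : V → Finset V} {K m D N : ℕ}

lemma exists_card_le_mul_card_nbrs (hR : 4 * m ≤ #R)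
    (hdense : ∀ A ⊆ R, 2 * m ≤ #A → 4 * #(sparseTo G K R A) < #R) :
    ∃ v ∈ R, #R ≤ 2 * K * #(nbrs G v R) := by
  classical
  obtain ⟨A, hAR, hA⟩ := exists_subset_card_eq (Nat.div_le_self #R 2)
  have hsparse := hdense A hAR (by omega)
  have hcard : #(sparseTo G K R A) < #(R \ A) := by
    rw [card_sdiff_of_subset hAR]
    omega
  obtain ⟨v, hv, hvA⟩ := exists_mem_notMem_of_card_lt_card hcard
  refine ⟨v, (mem_sdiff.1 hv).1, ?_⟩
  have hdeg : #A < K * #(nbrs G v A) := by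
    by_contra h
    exact hvA (mem_sparseTo.2 ⟨mem_sdiff.1 hv, not_lt.1 h⟩)
  have hmono : K * #(nbrs G v A) ≤ K * #(nbrs G v R) :=
    Nat.mul_le_mul_left K (card_le_card (nbrs_mono v hAR))
  rw [mul_assoc]
  omega

theorem exists_isComb_nbrs (hK : 2 ≤ K) (hm : 0 < m) (hN : 0 < N)
    (hdeg : ∀ v ∈ R, #(nbrs G v R) ≤ D) (hRD : 4 * D * N ≤ #R) (hRm : 4 * K ^ 2 * m ≤ #R)
    (hdense : ∀ A ⊆ R, 2 * m ≤ #A → 4 * #(sparseTo G K R A) < #R) :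
    ∃ v, ∃ S ⊆ nbrs G v R, ∃ P : V → Finset V, IsComb G S P ∧ N ≤ #S ∧
      ∀ a ∈ S, P a ⊆ R ∧ (∀ b ∈ P a, ¬ G.Adj v b) ∧ K * m ≤ #(P a) := by
  classical
  have hKm : 2 * m ≤ K * m := Nat.mul_le_mul_right m hK
  have hKKm : 2 * (K * m) ≤ K * (K * m) := Nat.mul_le_mul_right (K * m) hK
  have hRm' : 4 * (K * (K * m)) ≤ #R := by linarith
  obtain ⟨v, hv, hvR⟩ := exists_card_le_mul_card_nbrs (m := m) (by omega) hdense
  set A := nbrs G v R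
  have hAR : A ⊆ R := nbrs_subset v R
  have hAm : 2 * (K * m) ≤ #A := by
    refine Nat.le_of_mul_le_mul_left (c := 2 * K) ?_ (by omega)
    linarith
  have hAD : #A ≤ D := hdeg v hv
  set B := (R \ A) \ sparseTo G K R A with hB
  have hBdeg : ∀ b ∈ B, #A ≤ K * #(nbrs G b A) := by
    intro b hb
    rw [hB, mem_sdiff, mem_sparseTo] at hb
    by_contra h
    exact hb.2 ⟨mem_sdiff.1 hb.1, (not_le.1 h).le⟩
  have hBcard : #R ≤ 2 * #B := by
    have hsparse := hdense A hAR (by omega)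
    have hAcard : 4 * #A ≤ #R := by nlinarith
    have hRA := card_sdiff_of_subset hAR
    have hRAB := le_card_sdiff (sparseTo G K R A) (R \ A)
    rw [← hB] at hRAB
    omega
  have hBR : B ⊆ R \ A := sdiff_subset
  obtain ⟨S, hSA, P, hSP, hP, hunc⟩ :=
    exists_isComb (l := K * m) (card_pos.1 (by omega : 0 < #A)) hBdeg
  refine ⟨v, S, hSA, P, hSP, ?_, fun a ha ↦ ⟨(hP a ha).1.trans (hBR.trans sdiff_subset),
    fun b hb hvb ↦ ?_, (hP a ha).2⟩⟩
  · have hcover : #B ≤ #(uncovered G S B) + #S * D :=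
      card_le_card_uncovered_add_card_mul fun a ha ↦
        (card_le_card (nbrs_mono a (hBR.trans sdiff_subset))).trans (hdeg a (hAR (hSA ha)))
    refine Nat.le_of_mul_le_mul_left (c := D) ?_ (by nlinarith)
    nlinarith
  · obtain ⟨hbR, hbA⟩ := mem_sdiff.1 (hBR ((hP a ha).1 hb))
    exact hbA (mem_nbrs.2 ⟨hbR, hvb⟩)

open Classical in
lemma exists_mem_uncovered_two_mul_card_le (hm : 0 < m) (hRT : #R ≤ 2 * #(uncovered G T R))
    (hRm : 2 * m ≤ #R) (hP : ∀ a ∈ T, P a ⊆ R ∧ 2 * m ≤ #(P a))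
    (hdense : ∀ A ⊆ R, 2 * m ≤ #A → 4 * #(sparseTo G K R A) < #R) :
    ∃ y ∈ uncovered G T R, 2 * #{a ∈ T | y ∈ sparseTo G K R (P a)} ≤ #T := by
  refine exists_two_mul_card_filter_le (card_pos.1 (by omega)) _ fun a ha ↦ ?_
  have hsparse := hdense (P a) (hP a ha).1 (hP a ha).2
  have hsub : #{y ∈ uncovered G T R | y ∈ sparseTo G K R (P a)} ≤ #(sparseTo G K R (P a)) :=
    card_le_card fun y hy ↦ (mem_filter.1 hy).2
  omega

lemma exists_nbrs_teeth_of_isComb (hm : 0 < m) (hRT : #R ≤ 2 * #(uncovered G T R))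
    (hRm : 2 * m ≤ #R) (hK : 2 ≤ K) (hTP : IsComb G T P) (hP : ∀ a ∈ T, P a ⊆ R ∧ K * m ≤ #(P a))
    (hdense : ∀ A ⊆ R, 2 * m ≤ #A → 4 * #(sparseTo G K R A) < #R) :
    ∃ y ∈ uncovered G T R, ∃ T' ⊆ T, #T ≤ 2 * #T' ∧ ∀ a ∈ T', m ≤ #(nbrs G y (P a)) := by
  classical
  obtain ⟨y, hy, hyT⟩ := exists_mem_uncovered_two_mul_card_le hm hRT hRm
    (fun a ha ↦ ⟨(hP a ha).1, (Nat.mul_le_mul_right m hK).trans (hP a ha).2⟩) hdense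
  obtain ⟨hyR, hyna⟩ := mem_uncovered.1 hy
  refine ⟨y, hy, {a ∈ T | y ∉ sparseTo G K R (P a)}, filter_subset _ _, ?_, fun a ha ↦ ?_⟩
  · have := card_filter_add_card_filter_not (s := T) (fun a ↦ y ∈ sparseTo G K R (P a))
    omega
  · obtain ⟨haT, hya⟩ := mem_filter.1 ha
    have hyP : y ∉ P a := fun h ↦ hyna a haT ((hTP a haT y h a haT).2 rfl)
    refine Nat.le_of_mul_le_mul_left (c := K) ((hP a haT).2.trans ?_) (by omega)
    by_contra h
    exact hya (mem_sparseTo.2 ⟨⟨hyR, hyP⟩, (not_le.1 h).le⟩)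

end Dense

section Embedding

variable {A R R' U : Finset V} {c q s h : ℕ}

lemma sparseTo_mono (h : R ⊆ R') : sparseTo G c R A ⊆ sparseTo G c R' A := by
  intro v hv
  rw [mem_sparseTo] at hv ⊢
  exact ⟨⟨h hv.1.1, hv.1.2⟩, hv.2⟩

lemma exists_forall_card_lt_mul_card_nbrs {ι : Type*} [Fintype ι] {F : ι → SimpleGraph V}
    {X : ι → Finset V} (hR : Fintype.card ι * q < #R) (hdisj : ∀ i, Disjoint R (X i))
    (hsparse : ∀ i, #(sparseTo (F i) c R (X i)) ≤ q) :
    ∃ v ∈ R, ∀ i, #(X i) < c * #(nbrs (F i) v (X i)) := by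
  classical
  have hbad : #(univ.biUnion fun i ↦ sparseTo (F i) c R (X i)) < #R :=
    (card_biUnion_le_card_mul _ _ _ fun i _ ↦ hsparse i).trans_lt hR
  obtain ⟨v, hvR, hv⟩ := exists_mem_notMem_of_card_lt_card hbad
  refine ⟨v, hvR, fun i ↦ lt_of_not_ge fun hi ↦ hv (mem_biUnion.2 ⟨i, mem_univ i, ?_⟩)⟩
  exact mem_sparseTo.2 ⟨⟨hvR, Finset.disjoint_left.1 (hdisj i) hvR⟩, hi⟩

lemma adj_vecCons_iff {H : SimpleGraph (Fin (h + 1))} {v : V} {f : Fin h → V}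
    (hv : ∀ i, G.Adj v (f i) ↔ H.Adj 0 i.succ)
    (hf : ∀ i j, G.Adj (f i) (f j) ↔ H.Adj i.succ j.succ) (i j : Fin (h + 1)) :
    G.Adj (Matrix.vecCons v f i) (Matrix.vecCons v f j) ↔ H.Adj i j := by
  cases i using Fin.cases with
  | zero =>
    cases j using Fin.cases with
    | zero => simp
    | succ j => simpa using hv j
  | succ i =>
    cases j using Fin.cases with
    | zero => simpa [G.adj_comm, H.adj_comm] using hv i
    | succ j => simpa using hf i j

theorem exists_forall_mem_forall_adj_iff (hc : 0 < c) (hq : 0 < q)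
    (hsparse : ∀ A ⊆ U, q ≤ #A → #(sparseTo G c U A) ≤ q ∧ #(sparseTo Gᶜ c U A) ≤ q)
    (H : SimpleGraph (Fin h)) {X : Fin h → Finset V}
    (hdisj : Pairwise fun i j ↦ Disjoint (X i) (X j)) (hXU : ∀ i, X i ⊆ U)
    (hs : h * q ≤ s) (hX : ∀ i, c ^ h * s ≤ #(X i)) :
    ∃ f : Fin h → V, (∀ i, f i ∈ X i) ∧ ∀ i j, G.Adj (f i) (f j) ↔ H.Adj i j := by
  classical
  induction h with
  | zero => exact ⟨Fin.elim0, fun i ↦ i.elim0, fun i ↦ i.elim0⟩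
  | succ h ih =>
    have hsX : ∀ i, s ≤ #(X i) :=
      fun i ↦ (Nat.le_mul_of_pos_left s (by positivity)).trans (hX i)
    rw [add_mul, one_mul] at hs
    let F : Fin h → SimpleGraph V := fun i ↦ if H.Adj 0 i.succ then G else Gᶜ
    obtain ⟨v, hv, hvX⟩ := exists_forall_card_lt_mul_card_nbrs (F := F) (X := fun i ↦ X i.succ)
      (c := c) (q := q) (R := X 0) (by rw [Fintype.card_fin]; have := hsX 0; omega)
      (fun i ↦ hdisj (Fin.succ_ne_zero i).symm) fun i ↦ by
        refine (card_le_card (sparseTo_mono (hXU 0))).trans ?_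
        have hi := hsparse (X i.succ) (hXU i.succ) (by have := hsX i.succ; omega)
        by_cases hadj : H.Adj 0 i.succ
        · simpa only [F, if_pos hadj] using hi.1
        · simpa only [F, if_neg hadj] using hi.2
    have hsub : ∀ i, nbrs (F i) v (X i.succ) ⊆ X i.succ := fun i ↦ nbrs_subset v _
    obtain ⟨f, hfX, hf⟩ := ih (H.comap Fin.succ) (X := fun i ↦ nbrs (F i) v (X i.succ))
      (fun i j hij ↦ (hdisj ((Fin.succ_injective h).ne hij)).mono (hsub i) (hsub j))
      (fun i ↦ (hsub i).trans (hXU i.succ)) (by omega) fun i ↦ by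
        refine Nat.le_of_mul_le_mul_left (c := c) ?_ hc
        rw [← mul_assoc, ← pow_succ']
        exact (hX i.succ).trans (hvX i).le
    have hvf : ∀ i, G.Adj v (f i) ↔ H.Adj 0 i.succ := by
      intro i
      have hi := (mem_nbrs.1 (hfX i)).2
      by_cases hadj : H.Adj 0 i.succ
      · simpa only [F, if_pos hadj, hadj, iff_true] using hi
      · simp only [F, if_neg hadj, compl_adj] at hi
        simpa only [hadj, iff_false] using hi.2
    exact ⟨Matrix.vecCons v f, Fin.cases hv fun i ↦ hsub i (hfX i), adj_vecCons_iff hvf hf⟩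

lemma exists_pairwise_disjoint_card_eq (hU : h * s ≤ #U) : ∃ X : Fin h → Finset V,
    (Pairwise fun i j ↦ Disjoint (X i) (X j)) ∧ ∀ i, X i ⊆ U ∧ #(X i) = s := by
  obtain ⟨e⟩ : Nonempty (Fin h × Fin s ↪ U) :=
    Function.Embedding.nonempty_of_card_le (by simpa using hU)
  refine ⟨fun i ↦ univ.map ⟨fun j ↦ (e (i, j) : V), fun j j' hj ↦ ?_⟩, fun i i' hii' ↦ ?_,
    fun i ↦ ⟨fun a ha ↦ ?_, by simp⟩⟩
  · exact (Prod.mk.inj (e.injective (Subtype.ext hj))).2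
  · simp only [Finset.disjoint_left, mem_map, mem_univ, true_and]
    rintro _ ⟨j, rfl⟩ ⟨j', hj'⟩
    exact hii' (Prod.mk.inj (e.injective (Subtype.ext hj'))).1.symm
  · obtain ⟨j, -, rfl⟩ := mem_map.1 ha
    exact (e (i, j)).2

theorem exists_le_card_sparseTo {H : SimpleGraph (Fin h)} (hH : ¬ H.IsIndContained G) (hc : 0 < c)
    (hq : 0 < q) (hU : h * (c ^ h * (h * q)) ≤ #U) :
    ∃ B ⊆ U, q ≤ #B ∧ (q ≤ #(sparseTo G c U B) ∨ q ≤ #(sparseTo Gᶜ c U B)) := by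
  by_contra! hsparse
  obtain ⟨X, hdisj, hX⟩ := exists_pairwise_disjoint_card_eq hU
  obtain ⟨f, hfX, hf⟩ := exists_forall_mem_forall_adj_iff hc hq
    (fun A hA hqA ↦ ⟨(hsparse A hA hqA).1.le, (hsparse A hA hqA).2.le⟩) H hdisj
    (fun i ↦ (hX i).1) le_rfl fun i ↦ (hX i).2.ge
  have hinj : Function.Injective f := by
    intro i j hij
    by_contra hne
    exact Finset.disjoint_left.1 (hdisj hne) (hfX i) (hij ▸ hfX j)
  exact hH ⟨⟨⟨f, hinj⟩, hf _ _⟩⟩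

end Embedding

section FoxSudakov

variable {B U U' W : Finset V} {c q s r n h μ : ℕ}

/-- The sum of the degrees in the subgraph of `G` induced on `W`, that is, twice its number of
edges. -/
noncomputable def degSum (G : SimpleGraph V) (W : Finset V) : ℕ :=
  ∑ v ∈ W, #(nbrs G v W)

lemma degSum_le_card_sq (G : SimpleGraph V) (W : Finset V) : degSum G W ≤ #W ^ 2 := by
  rw [sq]
  exact sum_le_card_nsmul _ _ _ fun v _ ↦ card_le_card (nbrs_subset v W)

lemma card_nbrs_union [DecidableEq V] {A : Finset V} (h : Disjoint A B) (v : V) :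
    #(nbrs G v (A ∪ B)) = #(nbrs G v A) + #(nbrs G v B) := by
  classical
  simp only [nbrs, filter_union]
  exact card_union_of_disjoint (disjoint_filter_filter h)

lemma degSum_union [DecidableEq V] {A : Finset V} (h : Disjoint A B) :
    degSum G (A ∪ B) = degSum G A + degSum G B + 2 * ∑ b ∈ B, #(nbrs G b A) := by
  simp only [degSum, sum_union h, card_nbrs_union h, sum_add_distrib, sum_card_nbrs_comm G A B]
  ring

lemma exists_subset_card_nbrs_le (hW : degSum G W ≤ #W * μ) :
    ∃ W' ⊆ W, #W ≤ 2 * #W' ∧ ∀ v ∈ W', #(nbrs G v W') ≤ 2 * μ :=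
  ⟨{v ∈ W | #(nbrs G v W) ≤ 2 * μ}, filter_subset _ _,
    card_le_two_mul_card_filter_le_two_mul hW, fun v hv ↦
      (card_le_card (nbrs_mono v (filter_subset _ _))).trans (mem_filter.1 hv).2⟩

/-- `U` contains a set of `2 ^ s * q` vertices whose average degree in `G` is at most
`(1 + 2 ^ (s + 1) / c) * q`, so of order `q` as long as `2 ^ s` is of order at most `c`. -/
def HasSparseSubset (G : SimpleGraph V) (c q s : ℕ) (U : Finset V) : Prop :=
  ∃ W ⊆ U, #W = 2 ^ s * q ∧ c * degSum G W ≤ (c + 2 ^ (s + 1)) * 2 ^ s * q ^ 2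

lemma HasSparseSubset.mono (h : HasSparseSubset G c q s U) (hU : U ⊆ U') :
    HasSparseSubset G c q s U' :=
  let ⟨W, hW, hcard, hdeg⟩ := h
  ⟨W, hW.trans hU, hcard, hdeg⟩

lemma hasSparseSubset_zero (G : SimpleGraph V) (c : ℕ) (hU : q ≤ #U) :
    HasSparseSubset G c q 0 U := by
  obtain ⟨W, hWU, hW⟩ := exists_subset_card_eq hU
  refine ⟨W, hWU, by simp [hW], ?_⟩
  have hdeg := Nat.mul_le_mul_left c (degSum_le_card_sq G W)
  rw [hW] at hdeg
  calc c * degSum G W ≤ c * q ^ 2 + 2 * q ^ 2 := hdeg.trans (Nat.le_add_right _ _)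
    _ = (c + 2 ^ (0 + 1)) * 2 ^ 0 * q ^ 2 := by ring

theorem HasSparseSubset.succ_of_le_card_sparseTo
    (hX : ∀ X ⊆ U, n ≤ #X → HasSparseSubset G c q s X) (hBU : B ⊆ U) (hB : 2 * n ≤ #B)
    (hsparse : 2 * n ≤ #(sparseTo G c U B)) : HasSparseSubset G c q (s + 1) U := by
  classical
  obtain ⟨W₁, hW₁, hcard₁, hdeg₁⟩ := hX _ (sparseTo_subset G c U B) (by omega)
  have hsum : ∑ b ∈ B, c * #(nbrs G b W₁) ≤ #B * #W₁ :=
    calc ∑ b ∈ B, c * #(nbrs G b W₁) = ∑ a ∈ W₁, c * #(nbrs G a B) := by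
          rw [← mul_sum, ← mul_sum, sum_card_nbrs_comm]
      _ ≤ #W₁ * #B := sum_le_card_nsmul _ _ _ fun a ha ↦ (mem_sparseTo.1 (hW₁ ha)).2
      _ = #B * #W₁ := mul_comm _ _
  have hhalf := card_le_two_mul_card_filter_le_two_mul hsum
  obtain ⟨W₂, hW₂, hcard₂, hdeg₂⟩ := hX {b ∈ B | c * #(nbrs G b W₁) ≤ 2 * #W₁}
    ((filter_subset _ _).trans hBU) (by omega)
  have hdisj : Disjoint W₁ W₂ := Finset.disjoint_left.2 fun a ha₁ ha₂ ↦
    (mem_sparseTo.1 (hW₁ ha₁)).1.2 (mem_filter.1 (hW₂ ha₂)).1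
  refine ⟨W₁ ∪ W₂, union_subset (hW₁.trans (sparseTo_subset _ _ _ _))
    (hW₂.trans ((filter_subset _ _).trans hBU)), ?_, ?_⟩
  · rw [card_union_of_disjoint hdisj, hcard₁, hcard₂]
    ring
  · have hcross : ∑ b ∈ W₂, c * #(nbrs G b W₁) ≤ #W₂ * (2 * #W₁) :=
      sum_le_card_nsmul _ _ _ fun b hb ↦ (mem_filter.1 (hW₂ hb)).2
    rw [← mul_sum, hcard₁, hcard₂] at hcross
    rw [degSum_union hdisj]
    calc c * (degSum G W₁ + degSum G W₂ + 2 * ∑ b ∈ W₂, #(nbrs G b W₁))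
        = c * degSum G W₁ + c * degSum G W₂ + 2 * (c * ∑ b ∈ W₂, #(nbrs G b W₁)) := by ring
      _ ≤ (c + 2 ^ (s + 1)) * 2 ^ s * q ^ 2 + (c + 2 ^ (s + 1)) * 2 ^ s * q ^ 2
          + 2 * (2 ^ s * q * (2 * (2 ^ s * q))) := by gcongr
      _ = (c + 2 ^ (s + 1 + 1)) * 2 ^ (s + 1) * q ^ 2 := by ring

theorem hasSparseSubset_or_hasSparseSubset_compl {H : SimpleGraph (Fin h)}
    (hH : ¬ H.IsIndContained G) (hc : 0 < c) (hq : 0 < q)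
    (hU : (2 * h ^ 2 * c ^ h) ^ (s + r) * q ≤ #U) :
    HasSparseSubset G c q s U ∨ HasSparseSubset Gᶜ c q r U := by
  have hh : 0 < h := by
    rw [Nat.pos_iff_ne_zero]
    rintro rfl
    exact hH ⟨⟨.ofIsEmpty, fun {i} ↦ i.elim0⟩⟩
  have hC : 0 < 2 * h ^ 2 * c ^ h := by positivity
  have hqU : q ≤ #U := (Nat.le_mul_of_pos_left q (Nat.pow_pos hC)).trans hU
  induction s generalizing r U with
  | zero => exact .inl (hasSparseSubset_zero G c hqU)
  | succ s ihs =>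
    induction r generalizing U with
    | zero => exact .inr (hasSparseSubset_zero Gᶜ c hqU)
    | succ r ihr =>
      by_contra! hnone
      set n := (2 * h ^ 2 * c ^ h) ^ (s + r + 1) * q with hn
      have hqn : q ≤ n := Nat.le_mul_of_pos_left q (Nat.pow_pos hC)
      have hG : ∀ X ⊆ U, n ≤ #X → HasSparseSubset G c q s X := fun X hXU hX ↦
        (ihs (r := r + 1) hX (hqn.trans hX)).resolve_right fun h ↦ hnone.2 (h.mono hXU)
      have hGc : ∀ X ⊆ U, n ≤ #X → HasSparseSubset Gᶜ c q r X := fun X hXU hX ↦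
        (ihr (by rwa [show s + 1 + r = s + r + 1 by ring, ← hn]) (hqn.trans hX)).resolve_left
          fun h ↦ hnone.1 (h.mono hXU)
      have hUn : h * (c ^ h * (h * (2 * n))) ≤ #U :=
        calc h * (c ^ h * (h * (2 * n))) = (2 * h ^ 2 * c ^ h) ^ (s + 1 + (r + 1)) * q := by
              rw [hn]; ring
          _ ≤ #U := hU
      obtain ⟨B, hBU, hB, hsparse | hsparse⟩ := exists_le_card_sparseTo hH hc (by omega) hUn
      · exact hnone.1 (.succ_of_le_card_sparseTo hG hBU hB hsparse)
      · exact hnone.2 (.succ_of_le_card_sparseTo hGc hBU hB hsparse)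

lemma HasSparseSubset.exists_card_nbrs_le {d : ℕ} (h : HasSparseSubset G (2 ^ d) q d U) :
    ∃ W ⊆ U, 2 ^ d * q ≤ 2 * #W ∧ ∀ v ∈ W, #(nbrs G v W) ≤ 6 * q := by
  obtain ⟨W, hWU, hcard, hdeg⟩ := h
  have havg : degSum G W ≤ #W * (3 * q) := by
    refine Nat.le_of_mul_le_mul_left (c := 2 ^ d) (hdeg.trans_eq ?_) (by positivity)
    rw [hcard]
    ring
  obtain ⟨W', hW'W, hW', hmax⟩ := exists_subset_card_nbrs_le havg
  exact ⟨W', hW'W.trans hWU, hcard ▸ hW', fun v hv ↦ (hmax v hv).trans_eq (by ring)⟩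

theorem exists_card_nbrs_le_or_exists_card_nbrs_compl_le {H : SimpleGraph (Fin h)} {d : ℕ}
    (hH : ¬ H.IsIndContained G) (hq : 0 < q)
    (hU : (2 * h ^ 2 * (2 ^ d) ^ h) ^ (d + d) * q ≤ #U) :
    (∃ W ⊆ U, 2 ^ d * q ≤ 2 * #W ∧ ∀ v ∈ W, #(nbrs G v W) ≤ 6 * q) ∨
      ∃ W ⊆ U, 2 ^ d * q ≤ 2 * #W ∧ ∀ v ∈ W, #(nbrs Gᶜ v W) ≤ 6 * q :=
  (hasSparseSubset_or_hasSparseSubset_compl hH (by positivity) hq hU).imp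
    HasSparseSubset.exists_card_nbrs_le HasSparseSubset.exists_card_nbrs_le

end FoxSudakov

section Parameters

open Real

variable {x l : ℝ}

lemma exists_nat_le_le_two_mul (hx : 1 ≤ x) : ∃ t : ℕ, t ≤ x ∧ x ≤ 2 * t := by
  have := Nat.div_two_lt_floor hx
  exact ⟨⌊x⌋₊, Nat.floor_le (by linarith), by linarith⟩

lemma exists_nat_sq_le_le_four_mul_sq (hx : 1 ≤ x) : ∃ k : ℕ, (k : ℝ) ^ 2 ≤ x ∧ x ≤ 4 * k ^ 2 := by
  obtain ⟨k, hkx, hxk⟩ := exists_nat_le_le_two_mul (one_le_sqrt.2 hx)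
  refine ⟨k, (le_sqrt (by positivity) (by linarith)).1 hkx, ?_⟩
  rw [sqrt_le_left (by positivity)] at hxk
  linarith

lemma self_le_two_rpow (hl : 0 ≤ l) : l ≤ 2 ^ l := by
  obtain hl1 | hl1 := le_total l 1
  · exact hl1.trans (one_le_rpow (by norm_num) hl)
  · have := one_add_mul_self_le_rpow_one_add (s := 1) (by norm_num) hl1
    norm_num at this
    linarith

lemma sqrt_two_rpow_mul_self_le (hl : 0 ≤ l) : √(2 ^ l * l) ≤ 2 ^ l := by
  rw [sqrt_le_left (by positivity), sq]
  exact mul_le_mul_of_nonneg_left (self_le_two_rpow hl) (by positivity)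

lemma two_rpow_half_le_sqrt_two_rpow_mul_self (hl : 1 ≤ l) : (2 : ℝ) ^ (l / 2) ≤ √(2 ^ l * l) := by
  refine le_sqrt_of_sq_le ?_
  rw [← rpow_mul_natCast (by norm_num), Nat.cast_two, div_mul_cancel₀ _ (by norm_num)]
  exact le_mul_of_one_le_right (by positivity) hl

lemma two_rpow_div_eight_le {k : ℝ} (hk : 0 ≤ k) (hl : 52 ≤ l)
    (hkl : √(2 ^ l * l) ≤ 8192 * k ^ 2) : (2 : ℝ) ^ (l / 8) ≤ k := by
  have hsq : (2 : ℝ) ^ (l / 4) ≤ k ^ 2 := by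
    refine le_of_mul_le_mul_left ?_ (by norm_num : (0 : ℝ) < 2 ^ (13 : ℝ))
    calc (2 : ℝ) ^ (13 : ℝ) * 2 ^ (l / 4) = 2 ^ (13 + l / 4) := (rpow_add (by norm_num) _ _).symm
      _ ≤ 2 ^ (l / 2) := rpow_le_rpow_of_exponent_le (by norm_num) (by linarith)
      _ ≤ √(2 ^ l * l) := two_rpow_half_le_sqrt_two_rpow_mul_self (by linarith)
      _ ≤ 8192 * k ^ 2 := hkl
      _ = 2 ^ (13 : ℝ) * k ^ 2 := by norm_num
  refine le_of_sq_le_sq ?_ hk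
  rwa [← rpow_mul_natCast (by norm_num), Nat.cast_two, show l / 8 * 2 = l / 4 by ring]

lemma two_pow_lt_pow {k t : ℕ} (hk : 0 < k) (hl : 0 ≤ l) (hkl : (2 : ℝ) ^ (l / 8) ≤ k)
    (hk2 : 2048 * k ^ 2 ≤ √(2 ^ l * l)) (ht : (2 : ℝ) ^ l ≤ 3200 * k ^ 2 * t) :
    2 ^ (2 * k ^ 2) < k ^ t := by
  have hexp : 16 * (k : ℝ) ^ 2 < l * t := by
    refine lt_of_mul_lt_mul_left (a := 3200 * (k : ℝ) ^ 2) ?_ (by positivity)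
    calc 3200 * (k : ℝ) ^ 2 * (16 * k ^ 2) < (2048 * k ^ 2) ^ 2 := by
          have : (0 : ℝ) < k ^ 4 := by positivity
          linarith
      _ ≤ 2 ^ l * l := (le_sqrt (by positivity) (by positivity)).1 hk2
      _ ≤ 3200 * k ^ 2 * t * l := mul_le_mul_of_nonneg_right ht hl
      _ = 3200 * k ^ 2 * (l * t) := by ring
  have hlt : (2 : ℝ) ^ (2 * k ^ 2) < k ^ t :=
    calc (2 : ℝ) ^ (2 * k ^ 2) = 2 ^ (2 * (k : ℝ) ^ 2) := by
          rw [← rpow_natCast]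
          push_cast
          rfl
      _ < 2 ^ (l / 8 * t) := rpow_lt_rpow_of_exponent_lt (by norm_num) (by linarith)
      _ = (2 ^ (l / 8)) ^ t := rpow_mul_natCast (by norm_num) _ _
      _ ≤ k ^ t := pow_le_pow_left₀ (by positivity) hkl t
  exact_mod_cast hlt

theorem exists_nat_two_pow_lt_pow (hl : 52 ≤ l) : ∃ k t : ℕ, 1600 * (k : ℝ) ^ 2 * t ≤ 2 ^ l ∧
    2 ^ (2 * k ^ 2) < k ^ t ∧ √(2 ^ l * l) ≤ 8192 * k ^ 2 := by
  have hlarge : (2 : ℝ) ^ (26 : ℝ) ≤ √(2 ^ l * l) :=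
    (rpow_le_rpow_of_exponent_le (by norm_num) (by linarith)).trans
      (two_rpow_half_le_sqrt_two_rpow_mul_self (by linarith))
  norm_num at hlarge
  obtain ⟨k, hk, hk'⟩ := exists_nat_sq_le_le_four_mul_sq (x := √(2 ^ l * l) / 2048) (by linarith)
  have hk0 : 0 < k := by
    rw [Nat.pos_iff_ne_zero]
    rintro rfl
    norm_num at hk'
    linarith
  have hL := sqrt_two_rpow_mul_self_le (l := l) (by linarith)
  obtain ⟨t, ht, ht'⟩ := exists_nat_le_le_two_mul (x := 2 ^ l / (1600 * (k : ℝ) ^ 2)) <|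
    (one_le_div (by positivity)).2 (by linarith)
  rw [le_div_iff₀ (by positivity)] at ht
  rw [div_le_iff₀ (by positivity)] at ht'
  exact ⟨k, t, by linarith, two_pow_lt_pow hk0 (by linarith)
    (two_rpow_div_eight_le (by positivity) hl (by linarith)) (by linarith) (by linarith),
    by linarith⟩

end Parameters

end ErdosHajnal

namespace C5Free

open Finset ErdosHajnal

variable {V : Type} {G : SimpleGraph V}

lemma not_isIndContained (hG : C5Free G) : ¬ (cycleGraph 5).IsIndContained G :=
  hG

/-- The five-cycle is self-complementary, by doubling modulo `5`. -/
def cycleGraphFiveIsoCompl : cycleGraph 5 ≃g (cycleGraph 5)ᶜ where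
  toFun i := 2 * i
  invFun i := 3 * i
  left_inv := by decide
  right_inv := by decide
  map_rel_iff' := by simp only [compl_adj, cycleGraph_adj]; decide

lemma compl (hG : C5Free G) : C5Free Gᶜ := by
  intro h
  obtain ⟨f⟩ : (cycleGraph 5)ᶜ.IsIndContained G := by
    simpa only [compl_compl] using IsIndContained.compl h
  exact hG ⟨f.comp cycleGraphFiveIsoCompl.toEmbedding⟩

lemma false_of_chordless (hG : C5Free G) {a b c d e : V} (hab : G.Adj a b) (hbc : G.Adj b c)
    (hcd : G.Adj c d) (hde : G.Adj d e) (hea : G.Adj e a) (hac : ¬ G.Adj a c) (had : ¬ G.Adj a d)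
    (hbd : ¬ G.Adj b d) (hbe : ¬ G.Adj b e) (hce : ¬ G.Adj c e) : False := by
  let f : Fin 5 → V := ![a, b, c, d, e]
  have hcycle : ∀ i j : Fin 5, (cycleGraph 5).Adj i j ↔ j = i + 1 ∨ i = j + 1 := by
    simp only [cycleGraph_adj]; decide
  have hadj : ∀ i j, G.Adj (f i) (f j) ↔ (cycleGraph 5).Adj i j := by
    intro i j
    fin_cases i <;> fin_cases j <;>
      simp [f, *, hab.symm, hbc.symm, hcd.symm, hde.symm, hea.symm,
        G.adj_comm c a, G.adj_comm d a, G.adj_comm d b, G.adj_comm e b, G.adj_comm e c]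
  have hinj : Function.Injective f := by
    have htwinfree : ∀ i j : Fin 5, i ≠ j →
        ∃ l, (cycleGraph 5).Adj i l ∧ ¬ (cycleGraph 5).Adj j l := by
      simp only [hcycle]; decide
    intro i j hij
    by_contra hne
    obtain ⟨l, hil, hjl⟩ := htwinfree i j hne
    rw [← hadj, hij, hadj] at hil
    exact hjl hil
  exact hG ⟨⟨⟨f, hinj⟩, hadj _ _⟩⟩

section Combs

variable {R T : Finset V} {P : V → Finset V} {v y : V}

lemma sum_alphaOmega_le_of_isClique_compl (hG : C5Free G) (hT : Gᶜ.IsClique T)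
    (hTP : IsComb G T P) (hPR : ∀ a ∈ T, P a ⊆ R) (hvT : ∀ a ∈ T, G.Adj v a)
    (hvP : ∀ a ∈ T, ∀ b ∈ P a, ¬ G.Adj v b) :
    ∑ a ∈ T, alphaOmega G (P a) ≤ alphaOmega G R := by
  classical
  have hanticomplete : ∀ a ∈ T, ∀ a' ∈ T, a ≠ a' → Gᶜ.IsCompleteBetween (P a) (P a') := by
    intro a ha a' ha' hne b hb c hc
    have hab := (hTP a ha b hb a ha).2 rfl
    have hac' := (hTP a' ha' c hc a' ha').2 rfl
    have hab' : ¬ G.Adj a' b := fun h ↦ hne ((hTP a ha b hb a' ha').1 h).symm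
    have hac : ¬ G.Adj a c := fun h ↦ hne ((hTP a' ha' c hc a ha).1 h)
    rw [compl_adj]
    refine ⟨fun h ↦ hac (h ▸ hab), fun hbc ↦ ?_⟩
    exact hG.false_of_chordless (hvT a ha) hab hbc hac'.symm (hvT a' ha').symm
      (hvP a ha b hb) (hvP a' ha' c hc) hac ((compl_adj ..).1 (hT ha ha' hne)).2
      fun h ↦ hab' h.symm
  simpa only [alphaOmega_compl] using (sum_alphaOmega_le T P hanticomplete).trans
    (alphaOmega_mono Gᶜ (biUnion_subset.2 hPR))

lemma sum_alphaOmega_le_of_isClique (hG : C5Free G) (hT : G.IsClique T)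
    (hTP : IsComb G T P) (hPR : ∀ a ∈ T, P a ⊆ R) (hyT : ∀ a ∈ T, ¬ G.Adj a y)
    (hyP : ∀ a ∈ T, ∀ b ∈ P a, G.Adj y b) :
    ∑ a ∈ T, alphaOmega G (P a) ≤ alphaOmega G R := by
  classical
  have hcomplete : ∀ a ∈ T, ∀ a' ∈ T, a ≠ a' → G.IsCompleteBetween (P a) (P a') := by
    intro a ha a' ha' hne b hb c hc
    have hab := (hTP a ha b hb a ha).2 rfl
    have hac' := (hTP a' ha' c hc a' ha').2 rfl
    have hab' : ¬ G.Adj a' b := fun h ↦ hne ((hTP a ha b hb a' ha').1 h).symm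
    have hac : ¬ G.Adj a c := fun h ↦ hne ((hTP a' ha' c hc a ha).1 h)
    by_contra hbc
    exact hG.false_of_chordless (hyP a ha b hb) hab.symm (hT ha ha' hne) hac'
      (hyP a' ha' c hc).symm (fun h ↦ hyT a ha h.symm) (fun h ↦ hyT a' ha' h.symm)
      (fun h ↦ hab' h.symm) hbc hac
  exact (sum_alphaOmega_le T P hcomplete).trans (alphaOmega_mono G (biUnion_subset.2 hPR))

variable {K m x k D M : ℕ}

theorem mul_le_alphaOmega_of_dense (hG : C5Free G)
    (hx : ∀ U : Finset V, m ≤ #U → x ≤ alphaOmega G U)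
    (hK : 2 ≤ K) (hm : 0 < m) (hdeg : ∀ v ∈ R, #(nbrs G v R) ≤ D) (hRD : 4 * D * 16 ^ k ≤ #R)
    (hRm : 4 * K ^ 2 * m ≤ #R)
    (hdense : ∀ A ⊆ R, 2 * m ≤ #A → 4 * #(sparseTo G K R A) < #R) : k * x ≤ alphaOmega G R := by
  have hsum : ∀ (T : Finset V) (Q : V → Finset V), (∀ a ∈ T, m ≤ #(Q a)) →
      #T * x ≤ ∑ a ∈ T, alphaOmega G (Q a) :=
    fun T Q hQ ↦ card_nsmul_le_sum _ _ _ fun a ha ↦ hx _ (hQ a ha)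
  obtain ⟨v, S, hSv, P, hSP, hScard, hP⟩ :=
    exists_isComb_nbrs hK hm (by positivity) hdeg hRD hRm hdense
  have hramsey : (2 * k + 2 * k).choose (2 * k) ≤ #S :=
    calc (2 * k + 2 * k).choose (2 * k) ≤ 2 ^ (2 * k + 2 * k) := Nat.choose_le_two_pow _ _
      _ = 16 ^ k := by rw [← two_mul, ← mul_assoc, pow_mul]; norm_num
      _ ≤ #S := hScard
  have hRm' : 2 * m ≤ #R := (Nat.mul_le_mul_right m (by nlinarith)).trans hRm
  obtain ⟨T, hTS, hTcard, hT⟩ | ⟨T, hTS, hTcard, hT⟩ :=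
    exists_isClique_or_exists_isClique_compl G hramsey
  · have hRT : #R ≤ 2 * #(uncovered G T R) := by
      have hcover : #R ≤ #(uncovered G T R) + #T * D :=
        card_le_card_uncovered_add_card_mul fun a ha ↦ hdeg a (nbrs_subset v R (hSv (hTS ha)))
      have hk : k * D ≤ 16 ^ k * D :=
        Nat.mul_le_mul_right D (Nat.lt_pow_self (by norm_num)).le
      rw [hTcard] at hcover
      linarith
    obtain ⟨y, hy, T', hT'T, hT'card, hyP⟩ := exists_nbrs_teeth_of_isComb hm hRT hRm' hK
      (hSP.mono hTS fun _ _ ↦ subset_rfl)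
      (fun a ha ↦ ⟨(hP a (hTS ha)).1, (hP a (hTS ha)).2.2⟩) hdense
    calc k * x ≤ #T' * x := Nat.mul_le_mul_right x (by omega)
      _ ≤ ∑ a ∈ T', alphaOmega G (nbrs G y (P a)) := hsum _ _ hyP
      _ ≤ alphaOmega G R := hG.sum_alphaOmega_le_of_isClique
        (hT.subset (coe_subset.2 hT'T)) (hSP.mono (hT'T.trans hTS) fun a _ ↦ nbrs_subset y (P a))
        (fun a ha ↦ (nbrs_subset y (P a)).trans (hP a (hTS (hT'T ha))).1)
        (fun a ha ↦ (mem_uncovered.1 hy).2 a (hT'T ha)) fun a _ b hb ↦ (mem_nbrs.1 hb).2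
  · calc k * x ≤ #T * x := Nat.mul_le_mul_right x (by omega)
      _ ≤ ∑ a ∈ T, alphaOmega G (P a) :=
        hsum _ _ fun a ha ↦ (by nlinarith : m ≤ K * m).trans (hP a (hTS ha)).2.2
      _ ≤ alphaOmega G R := hG.sum_alphaOmega_le_of_isClique_compl hT
        (hSP.mono hTS fun _ _ ↦ subset_rfl) (fun a ha ↦ (hP a (hTS ha)).1)
        (fun a ha ↦ (mem_nbrs.1 (hSv (hTS ha))).2) fun a ha ↦ (hP a (hTS ha)).2.1

theorem mul_le_alphaOmega_of_four_pow_le (hG : C5Free G)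
    (hx : ∀ U : Finset V, m ≤ #U → x ≤ alphaOmega G U)
    (hα : ∀ S : Finset V, Gᶜ.IsClique S → #S ≤ M) (hM : 0 < M) (hm : 0 < m) {j : ℕ} (hjk : j ≤ k)
    (hdeg : ∀ v ∈ R, #(nbrs G v R) ≤ D) (hRD : 4 ^ j * (4 * D * 16 ^ k) ≤ #R)
    (hRm : 4 ^ j * (16 * M ^ 2 * m) ≤ #R) : j * x ≤ alphaOmega G R := by
  induction j generalizing R with
  | zero => simp
  | succ j ih =>
    by_cases hdense : ∀ A ⊆ R, 2 * m ≤ #A → 4 * #(sparseTo G (2 * M) R A) < #R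
    · have hpow : 1 ≤ 4 ^ (j + 1) := Nat.one_le_pow _ _ (by norm_num)
      refine (Nat.mul_le_mul_right x hjk).trans <| hG.mul_le_alphaOmega_of_dense hx
        (K := 2 * M) (by omega) hm hdeg (by nlinarith) (by nlinarith) hdense
    · push Not at hdense
      obtain ⟨A, hAR, hA, hsparse⟩ := hdense
      rw [pow_succ] at hRD hRm
      have hZ : j * x ≤ alphaOmega G (sparseTo G (2 * M) R A) := by
        refine ih (by omega) (fun v hv ↦ ?_) (by linarith) (by linarith)
        exact (card_le_card (nbrs_mono v (sparseTo_subset _ _ _ _))).trans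
          (hdeg v (sparseTo_subset _ _ _ _ hv))
      obtain ⟨A', -, hA', hadd⟩ := exists_alphaOmega_add_le hM hα hAR
      have hxA' : x ≤ alphaOmega G A' := hx A' (by omega)
      rw [add_mul, one_mul]
      omega

end Combs

section Growth

variable {U W : Finset V} {k m x M t : ℕ}

lemma mul_le_alphaOmega_of_card_nbrs_le (hG : C5Free G)
    (hx : ∀ U : Finset V, m ≤ #U → x ≤ alphaOmega G U)
    (hα : ∀ S : Finset V, Gᶜ.IsClique S → #S ≤ M) (hM : 0 < M) (hm : 0 < m)
    (hW : 2 ^ (6 * k + 6) * (M ^ 2 * m) ≤ 2 * #W)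
    (hdeg : ∀ v ∈ W, #(nbrs G v W) ≤ 6 * (M ^ 2 * m)) : k * x ≤ alphaOmega G W := by
  have hpow : 2 ^ (6 * k + 6) = 64 * (4 ^ k * 16 ^ k) := by
    rw [pow_add, pow_mul, ← mul_pow]
    norm_num [mul_comm]
  rw [hpow] at hW
  refine hG.mul_le_alphaOmega_of_four_pow_le hx hα hM hm le_rfl hdeg ?_ ?_
  · linarith
  · have : 4 ^ k * 1 * (M ^ 2 * m) ≤ 4 ^ k * 16 ^ k * (M ^ 2 * m) := by
      gcongr
      exact Nat.one_le_pow _ _ (by norm_num)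
    linarith

theorem mul_le_alphaOmega (hG : C5Free G) (hx : ∀ U : Finset V, m ≤ #U → x ≤ alphaOmega G U)
    (hα : ∀ S : Finset V, Gᶜ.IsClique S → #S ≤ 2 ^ k ^ 2)
    (hω : ∀ S : Finset V, G.IsClique S → #S ≤ 2 ^ k ^ 2) (hm : 0 < m)
    (hU : 2 ^ (1600 * k ^ 2) * m ≤ #U) : k * x ≤ alphaOmega G U := by
  obtain rfl | hk := Nat.eq_zero_or_pos k
  · simp
  set d := 6 * k + 6 with hd
  set q := (2 ^ k ^ 2) ^ 2 * m with hq
  have hdU : (2 * 5 ^ 2 * (2 ^ d) ^ 5) ^ (d + d) * q ≤ #U :=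
    calc (2 * 5 ^ 2 * (2 ^ d) ^ 5) ^ (d + d) * q
        ≤ (2 ^ 6 * (2 ^ d) ^ 5) ^ (d + d) * q := by gcongr; norm_num
      _ = 2 ^ ((6 + d * 5) * (d + d) + k ^ 2 * 2) * m := by
        rw [hq, ← mul_assoc, ← pow_mul, ← pow_mul, ← pow_add, ← pow_mul, ← pow_add]
      _ ≤ 2 ^ (1600 * k ^ 2) * m := by
        gcongr
        · norm_num
        · rw [hd]; nlinarith
      _ ≤ #U := hU
  obtain ⟨W, hWU, hW, hdeg⟩ | ⟨W, hWU, hW, hdeg⟩ :=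
    exists_card_nbrs_le_or_exists_card_nbrs_compl_le hG.not_isIndContained (by positivity) hdU
  · exact (hG.mul_le_alphaOmega_of_card_nbrs_le hx hα (by positivity) hm hW hdeg).trans
      (alphaOmega_mono G hWU)
  · rw [← alphaOmega_compl]
    refine (hG.compl.mul_le_alphaOmega_of_card_nbrs_le ?_ ?_ (by positivity) hm hW hdeg).trans
      (alphaOmega_mono Gᶜ hWU)
    · simpa only [alphaOmega_compl] using hx
    · simpa only [compl_compl] using hω

theorem pow_le_alphaOmega (hG : C5Free G) (hα : ∀ S : Finset V, Gᶜ.IsClique S → #S ≤ 2 ^ k ^ 2)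
    (hω : ∀ S : Finset V, G.IsClique S → #S ≤ 2 ^ k ^ 2) (hU : 2 ^ (1600 * k ^ 2 * t) ≤ #U) :
    k ^ t ≤ alphaOmega G U := by
  induction t generalizing U with
  | zero => exact alphaOmega_pos G (card_pos.1 (by simpa using hU))
  | succ t ih =>
    rw [pow_succ']
    refine hG.mul_le_alphaOmega (fun _ ↦ ih) hα hω (by positivity) ?_
    rwa [← pow_add, add_comm, ← mul_add_one]

theorem two_pow_le_max_cliqueNum [Fintype V] (hG : C5Free G)
    (hV : 2 ^ (1600 * k ^ 2 * t) ≤ Fintype.card V) (hkt : 2 ^ (2 * k ^ 2) < k ^ t) :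
    2 ^ k ^ 2 ≤ max Gᶜ.cliqueNum G.cliqueNum := by
  by_contra! hmax
  obtain ⟨hα, hω⟩ := max_lt_iff.1 hmax
  have hprod := hG.pow_le_alphaOmega (U := univ)
    (fun S hS ↦ hS.card_le_cliqueNum.trans hα.le)
    (fun S hS ↦ hS.card_le_cliqueNum.trans hω.le) hV
  have hle : alphaOmega G univ ≤ 2 ^ k ^ 2 * 2 ^ k ^ 2 :=
    Nat.mul_le_mul ((cliqueNum_induce_le _).trans hα.le) ((cliqueNum_induce_le _).trans hω.le)
  rw [← pow_add, ← two_mul] at hle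
  omega

end Growth

lemma two_rpow_le_max_cliqueNum_of_le {V : Type} [Fintype V] {G : SimpleGraph V} (hG : C5Free G)
    {l : ℝ} (hl : 52 ≤ l) (hV : (Fintype.card V : ℝ) = 2 ^ (2 : ℝ) ^ l) :
    (2 : ℝ) ^ (√(2 ^ l * l) / 8192) ≤ max Gᶜ.cliqueNum G.cliqueNum := by
  obtain ⟨k, t, hkt, hpow, hk⟩ := exists_nat_two_pow_lt_pow hl
  have hcard : 2 ^ (1600 * k ^ 2 * t) ≤ Fintype.card V := by
    have hcast : (2 : ℝ) ^ (1600 * k ^ 2 * t) ≤ Fintype.card V := by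
      rw [hV, ← Real.rpow_natCast]
      exact Real.rpow_le_rpow_of_exponent_le (by norm_num) (by exact_mod_cast hkt)
    exact_mod_cast hcast
  calc (2 : ℝ) ^ (√(2 ^ l * l) / 8192) ≤ 2 ^ ((k ^ 2 : ℕ) : ℝ) :=
        Real.rpow_le_rpow_of_exponent_le (by norm_num) (by push_cast; linarith)
    _ = (2 ^ k ^ 2 : ℕ) := by rw [Real.rpow_natCast]; push_cast; rfl
    _ ≤ max Gᶜ.cliqueNum G.cliqueNum := by exact_mod_cast hG.two_pow_le_max_cliqueNum hcard hpow

theorem two_rpow_le_max_cliqueNum {V : Type} [Fintype V] {G : SimpleGraph V} (hG : C5Free G)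
    {l : ℝ} (hl : 0 ≤ l) (hV : (Fintype.card V : ℝ) = 2 ^ (2 : ℝ) ^ l) :
    (2 : ℝ) ^ (1 / 2 ^ 52 * √(2 ^ l * l)) ≤ max Gᶜ.cliqueNum G.cliqueNum := by
  obtain hlarge | hsmall := le_total 52 l
  · have hexp : 1 / 2 ^ 52 * √(2 ^ l * l) ≤ √(2 ^ l * l) / 8192 := by
      linarith [Real.sqrt_nonneg (2 ^ l * l)]
    exact (Real.rpow_le_rpow_of_exponent_le (by norm_num) hexp).trans
      (hG.two_rpow_le_max_cliqueNum_of_le hlarge hV)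
  · have hexp : 1 / 2 ^ 52 * √(2 ^ l * l) ≤ 1 := by
      have hle := (sqrt_two_rpow_mul_self_le hl).trans
        (Real.rpow_le_rpow_of_exponent_le one_le_two hsmall)
      norm_num at hle
      linarith
    have hV2 : (1 : ℝ) < Fintype.card V := hV ▸ Real.one_lt_rpow one_lt_two (by positivity)
    have : Nontrivial V := Fintype.one_lt_card_iff_nontrivial.1 (by exact_mod_cast hV2)
    calc (2 : ℝ) ^ (1 / 2 ^ 52 * √(2 ^ l * l)) ≤ 2 ^ (1 : ℝ) :=
          Real.rpow_le_rpow_of_exponent_le one_le_two hexp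
      _ = (2 : ℕ) := by simp
      _ ≤ max Gᶜ.cliqueNum G.cliqueNum := by exact_mod_cast two_le_max_cliqueNum G

end C5Free

/-- There exists `c > 0` such that every `C₅`-free graph `G` on `n > 1` vertices
satisfies `max (α G) (ω G) ≥ 2 ^ (c√(log n · log log n))` (logs base 2). -/
theorem exists_const_c5_free_max_indep_clique :
    ∃ c : ℝ, 0 < c ∧
      ∀ (n : ℕ) (G : SimpleGraph (Fin n)), 1 < n → C5Free G →
        (2 : ℝ) ^ (c * Real.sqrt (Real.logb 2 n * Real.logb 2 (Real.logb 2 n))) ≤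
          (max (Gᶜ.cliqueNum) (G.cliqueNum) : ℝ) := by
  refine ⟨1 / 2 ^ 52, by positivity, fun n G hn hG ↦ ?_⟩
  have hn2 : (2 : ℝ) ≤ n := by exact_mod_cast hn
  have hlog : 1 ≤ Real.logb 2 n :=
    (Real.le_logb_iff_rpow_le one_lt_two (by linarith)).2 (by simpa using hn2)
  have hloglog : 0 ≤ Real.logb 2 (Real.logb 2 n) := Real.logb_nonneg one_lt_two hlog
  have hlog_eq : (2 : ℝ) ^ Real.logb 2 (Real.logb 2 n) = Real.logb 2 n :=
    Real.rpow_logb two_pos (by norm_num) (by linarith)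
  have hn_eq : (2 : ℝ) ^ Real.logb 2 n = n := Real.rpow_logb two_pos (by norm_num) (by linarith)
  have hmax := hG.two_rpow_le_max_cliqueNum hloglog (by rw [Fintype.card_fin, hlog_eq, hn_eq])
  rwa [hlog_eq, Nat.cast_max] at hmax
end

section
/- For every real c with 0 < c ≤ 1/2 and every graph G with n > 0 vertices, if (i) every vertex of G has closed degree at most n/16, and (ii) for every two disjoint subsets A, B ⊆ V(G) with |A| ≥ cn/2 and |B| ≥ n/16 the edge-density between A and B is at least c, then G contains C₅ (i.e., G has an induced subgraph isomorphic to the cycle of length five). -/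
open SimpleGraph
open scoped Classical

/-!
Write `N(X)` for the set of vertices with a neighbour in `X`, and `s = n/16`. Some vertex `v` has
degree at least `cn/2`, so `N(v)` has neighbours almost everywhere, and adding neighbours of `v` one
at a time yields `X ⊆ N(v)` with `6s ≤ |N(X)| ≤ 7s`. At least `n/2` vertices then lie outside
`N(v) ∪ N(X)`, so some `w ∈ N(v)` has a set `Y` of at least `cn/2` neighbours there. Split `X` by
adjacency to `w`; one part `X'` has `|N(X')| ≥ 3s`.

If `X'` misses `N(w)`, an edge `de` with `e ∈ Y` and `d ∈ N(X') \ (N(v) ∪ N(w))` closes a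
five-cycle `v x d e w` with `x ∈ X'`. If `X' ⊆ N(w)`, move the centre from `v` to `w`: some `y ∈ Y`
has at least `cn/2` neighbours outside `N(w) ∪ N(X)`, and the same argument gives a five-cycle
`w x d e y`, because `y` has no neighbour in `X`.
-/

section FiveCycle

variable {V W : Type*} {G : SimpleGraph V} {H : SimpleGraph W}

lemma injective_of_adj_iff_of_injective_neighborSet (hH : Function.Injective H.neighborSet)
    {f : W → V} (hf : ∀ i j, G.Adj (f i) (f j) ↔ H.Adj i j) : Function.Injective f := by
  intro i j hij
  refine hH (Set.ext fun k ↦ ?_)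
  rw [mem_neighborSet, mem_neighborSet, ← hf, ← hf, hij]

lemma injective_neighborSet_cycleGraph_five :
    Function.Injective (cycleGraph 5).neighborSet := by
  intro i j hij
  have hadj : ∀ k, (cycleGraph 5).Adj i k ↔ (cycleGraph 5).Adj j k := Set.ext_iff.1 hij
  simp only [cycleGraph_adj] at hadj
  clear hij
  revert i j
  decide

lemma nonempty_cycleGraph_five_embedding {f : Fin 5 → V}
    (hadj : ∀ i, G.Adj (f i) (f (i + 1))) (hnonadj : ∀ i, ¬ G.Adj (f i) (f (i + 2))) :
    Nonempty (cycleGraph 5 ↪g G) := by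
  have hdist : ∀ i j : Fin 5, i = j ∨ j = i + 1 ∨ i = j + 1 ∨ j = i + 2 ∨ i = j + 2 := by decide
  have hcycle : ∀ i : Fin 5, (cycleGraph 5).Adj i (i + 1) ∧ ¬ (cycleGraph 5).Adj i (i + 2) := by
    simp only [cycleGraph_adj]
    decide
  have hiff : ∀ i j, G.Adj (f i) (f j) ↔ (cycleGraph 5).Adj i j := by
    intro i j
    rcases hdist i j with rfl | rfl | rfl | rfl | rfl
    · exact iff_of_false G.irrefl (cycleGraph 5).irrefl
    · exact iff_of_true (hadj i) (hcycle i).1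
    · exact iff_of_true (hadj j).symm (hcycle j).1.symm
    · exact iff_of_false (hnonadj i) (hcycle i).2
    · exact iff_of_false (mt Adj.symm (hnonadj j)) (mt Adj.symm (hcycle j).2)
  exact ⟨⟨⟨f, injective_of_adj_iff_of_injective_neighborSet
    injective_neighborSet_cycleGraph_five hiff⟩, hiff _ _⟩⟩

end FiveCycle

section Counting

lemma exists_subset_card_biUnion_mem_Icc {α β : Type*} [DecidableEq β] {f : α → Finset β}
    {A : Finset α} {s t : ℝ} (hst : 0 ≤ t + s) (hf : ∀ a ∈ A, ((f a).card : ℝ) ≤ s)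
    (hA : t ≤ (A.biUnion f).card) :
    ∃ X ⊆ A, ((X.biUnion f).card : ℝ) ∈ Set.Icc t (t + s) := by
  induction A using Finset.induction_on with
  | empty => exact ⟨∅, subset_rfl, hA, by simpa using hst⟩
  | insert a A _ ih =>
    rcases le_or_gt t (A.biUnion f).card with h | h
    · obtain ⟨X, hXA, hX⟩ := ih (fun b hb ↦ hf b (Finset.mem_insert_of_mem hb)) h
      exact ⟨X, hXA.trans (Finset.subset_insert _ _), hX⟩
    · refine ⟨insert a A, subset_rfl, hA, ?_⟩
      have hunion : (((insert a A).biUnion f).card : ℝ) ≤ (f a).card + (A.biUnion f).card := by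
        rw [Finset.biUnion_insert]
        exact_mod_cast Finset.card_union_le _ _
      linarith [hf a (Finset.mem_insert_self a A)]

lemma exists_mul_card_le_of_le_edgeDensity {V : Type*} {G : SimpleGraph V} [DecidableRel G.Adj]
    {A B : Finset V} {c : ℝ} (hA : A.Nonempty) (hc : c ≤ G.edgeDensity A B) :
    ∃ a ∈ A, c * B.card ≤ ({b ∈ B | G.Adj a b} : Finset V).card := by
  rcases B.eq_empty_or_nonempty with rfl | hB
  · exact hA.imp fun a ha ↦ ⟨ha, by simp⟩
  have hcount : (G.interedges A B).card = ∑ a ∈ A, ({b ∈ B | G.Adj a b} : Finset V).card := by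
    simp only [interedges_def, Finset.card_filter, Finset.sum_product]
  refine Finset.exists_le_of_sum_le hA ?_
  have hAB : (0 : ℝ) < A.card * B.card := by
    exact_mod_cast Nat.mul_pos hA.card_pos hB.card_pos
  rw [edgeDensity_def] at hc
  push_cast [hcount] at hc
  calc ∑ _ ∈ A, c * (B.card : ℝ) = c * (A.card * B.card) := by
        rw [Finset.sum_const, nsmul_eq_mul]; ring
    _ ≤ ∑ a ∈ A, (({b ∈ B | G.Adj a b} : Finset V).card : ℝ) := (le_div_iff₀ hAB).1 hc

end Counting

section Neighborhood

variable {V : Type*} [Fintype V] [DecidableEq V] {G : SimpleGraph V} [DecidableRel G.Adj]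

variable (G) in
/-- The open neighbourhood `N(X)` of a vertex set: all vertices with a neighbour in `X`, including
those that lie in `X` themselves. -/
def neighborhood (X : Finset V) : Finset V :=
  X.biUnion fun x ↦ G.neighborFinset x

variable (G) in
/-- The neighbours of `p` outside `N(u) ∪ N(X)`: the candidates for the vertex following `p` on a
five-cycle that passes through `p`, its neighbour `u` and a vertex of `X`. -/
def privateNeighbors (X : Finset V) (u p : V) : Finset V :=
  {e ∈ (G.neighborFinset u ∪ neighborhood G X)ᶜ | G.Adj p e}

lemma mem_neighborhood {X : Finset V} {y : V} :
    y ∈ neighborhood G X ↔ ∃ x ∈ X, G.Adj x y := by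
  simp [neighborhood]

lemma mem_privateNeighbors {X : Finset V} {u p e : V} :
    e ∈ privateNeighbors G X u p ↔
      (¬ G.Adj u e ∧ ∀ x ∈ X, ¬ G.Adj x e) ∧ G.Adj p e := by
  simp [privateNeighbors, mem_neighborhood]

lemma card_neighborhood_le_add_filter (X : Finset V) (P : V → Prop) [DecidablePred P] :
    (neighborhood G X).card ≤
      (neighborhood G {x ∈ X | P x}).card + (neighborhood G {x ∈ X | ¬ P x}).card := by
  conv_lhs => rw [← Finset.filter_union_filter_not_eq P X]
  rw [neighborhood, Finset.union_biUnion]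
  exact Finset.card_union_le _ _

end Neighborhood

/-- The density hypothesis on `G`, with `n = |V|`: any two disjoint vertex sets with at least `cn/2`
and at least `n/16` elements have edge-density at least `c` between them. -/
def IsDenseBetweenLarge {V : Type*} [Fintype V] (G : SimpleGraph V) [DecidableRel G.Adj]
    (c : ℝ) : Prop :=
  ∀ A B : Finset V, Disjoint A B → c * Fintype.card V / 2 ≤ A.card →
    (Fintype.card V : ℝ) / 16 ≤ B.card → c ≤ G.edgeDensity A B

namespace IsDenseBetweenLarge

variable {V : Type*} [Fintype V] {G : SimpleGraph V} [DecidableRel G.Adj] {c : ℝ}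

section Nonempty

variable [Nonempty V]

lemma exists_mul_card_le_card_filter_adj (hG : IsDenseBetweenLarge G c) (hc : 0 < c)
    {A B : Finset V} (hAB : Disjoint A B) (hA : c * Fintype.card V / 2 ≤ A.card)
    (hB : (Fintype.card V : ℝ) / 16 ≤ B.card) :
    ∃ a ∈ A, c * B.card ≤ ({b ∈ B | G.Adj a b} : Finset V).card := by
  refine exists_mul_card_le_of_le_edgeDensity ?_ (hG A B hAB hA hB)
  have hpos : (0 : ℝ) < A.card := lt_of_lt_of_le (by positivity) hA
  exact Finset.card_pos.1 (by exact_mod_cast hpos)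

lemma exists_adj (hG : IsDenseBetweenLarge G c) (hc : 0 < c) {A B : Finset V}
    (hAB : Disjoint A B) (hA : c * Fintype.card V / 2 ≤ A.card)
    (hB : (Fintype.card V : ℝ) / 16 ≤ B.card) : ∃ a ∈ A, ∃ b ∈ B, G.Adj a b := by
  obtain ⟨a, ha, hcard⟩ := hG.exists_mul_card_le_card_filter_adj hc hAB hA hB
  have hBpos : (0 : ℝ) < B.card := lt_of_lt_of_le (by positivity) hB
  have hpos : (0 : ℝ) < ({b ∈ B | G.Adj a b} : Finset V).card :=
    lt_of_lt_of_le (by positivity) hcard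
  obtain ⟨b, hb⟩ := Finset.card_pos.1 (by exact_mod_cast hpos)
  exact ⟨a, ha, b, Finset.mem_filter.1 hb⟩

lemma exists_le_card_filter_adj (hG : IsDenseBetweenLarge G c) (hc : 0 < c) {A B : Finset V}
    (hAB : Disjoint A B) (hA : c * Fintype.card V / 2 ≤ A.card)
    (hB : (Fintype.card V : ℝ) / 2 ≤ B.card) :
    ∃ a ∈ A, c * Fintype.card V / 2 ≤ ({b ∈ B | G.Adj a b} : Finset V).card := by
  have hB' : (Fintype.card V : ℝ) / 16 ≤ B.card := le_trans (by gcongr; norm_num) hB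
  obtain ⟨a, ha, hcard⟩ := hG.exists_mul_card_le_card_filter_adj hc hAB hA hB'
  refine ⟨a, ha, le_trans ?_ hcard⟩
  calc c * Fintype.card V / 2 = c * (Fintype.card V / 2) := by ring
    _ ≤ c * B.card := by gcongr

variable [DecidableEq V]

lemma card_sub_card_sub_le_card_neighborhood (hG : IsDenseBetweenLarge G c) (hc : 0 < c)
    {A : Finset V} (hA : c * Fintype.card V / 2 ≤ A.card) :
    Fintype.card V - A.card - (Fintype.card V : ℝ) / 16 ≤ (neighborhood G A).card := by
  have hrest : ((A ∪ neighborhood G A)ᶜ.card : ℝ) < Fintype.card V / 16 := by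
    by_contra! hge
    have hdisj : Disjoint A (A ∪ neighborhood G A)ᶜ :=
      disjoint_compl_right.mono_left Finset.subset_union_left
    obtain ⟨a, ha, b, hb, hab⟩ := hG.exists_adj hc hdisj hA hge
    exact Finset.mem_compl.1 hb
      (Finset.mem_union_right _ (mem_neighborhood.2 ⟨a, ha, hab⟩))
  have hunion : ((A ∪ neighborhood G A).card : ℝ) ≤ A.card + (neighborhood G A).card := by
    exact_mod_cast Finset.card_union_le _ _
  have htotal : ((A ∪ neighborhood G A).card : ℝ) + (A ∪ neighborhood G A)ᶜ.card =
      Fintype.card V := by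
    exact_mod_cast Finset.card_add_card_compl _
  linarith

lemma exists_subset_neighborFinset_card_neighborhood_mem_Icc (hG : IsDenseBetweenLarge G c)
    (hc : 0 < c) (hdeg : ∀ v, (G.degree v : ℝ) ≤ Fintype.card V / 16) {v : V}
    (hv : c * Fintype.card V / 2 ≤ G.degree v) :
    ∃ X ⊆ G.neighborFinset v, ((neighborhood G X).card : ℝ) ∈
      Set.Icc (6 * (Fintype.card V : ℝ) / 16) (7 * Fintype.card V / 16) := by
  rw [← card_neighborFinset_eq_degree] at hv
  have hcover := hG.card_sub_card_sub_le_card_neighborhood hc hv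
  rw [card_neighborFinset_eq_degree] at hcover
  have hlarge : 6 * (Fintype.card V : ℝ) / 16 ≤ (neighborhood G (G.neighborFinset v)).card := by
    linarith [hdeg v, (Fintype.card V).cast_nonneg (α := ℝ)]
  have hstep : ∀ a ∈ G.neighborFinset v,
      ((G.neighborFinset a).card : ℝ) ≤ Fintype.card V / 16 := fun a _ ↦ by
    simpa only [card_neighborFinset_eq_degree] using hdeg a
  have hsum : 6 * (Fintype.card V : ℝ) / 16 + Fintype.card V / 16 = 7 * Fintype.card V / 16 := by
    ring
  rw [← hsum]
  exact exists_subset_card_biUnion_mem_Icc (by positivity) hstep hlarge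

lemma exists_le_card_privateNeighbors (hG : IsDenseBetweenLarge G c) (hc : 0 < c) {u : V}
    (hu : (G.degree u : ℝ) ≤ Fintype.card V / 16) {X : Finset V}
    (hX : ((neighborhood G X).card : ℝ) ≤ 7 * Fintype.card V / 16) {A : Finset V}
    (hAu : A ⊆ G.neighborFinset u) (hA : c * Fintype.card V / 2 ≤ A.card) :
    ∃ p ∈ A, c * Fintype.card V / 2 ≤ (privateNeighbors G X u p).card := by
  refine hG.exists_le_card_filter_adj hc ?_ hA ?_
  · exact disjoint_compl_right.mono_left (hAu.trans Finset.subset_union_left)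
  · have hunion : ((G.neighborFinset u ∪ neighborhood G X).card : ℝ) ≤
        G.degree u + (neighborhood G X).card := by
      rw [← card_neighborFinset_eq_degree]
      exact_mod_cast Finset.card_union_le _ _
    rw [Finset.card_compl, Nat.cast_sub (Finset.card_le_univ _)]
    linarith

lemma nonempty_embedding_of_privateNeighbors (hG : IsDenseBetweenLarge G c) (hc : 0 < c)
    (hdeg : ∀ v, (G.degree v : ℝ) ≤ Fintype.card V / 16) {u p : V} (hup : G.Adj u p)
    {X X' : Finset V} (hX'X : X' ⊆ X) (hX' : ∀ x ∈ X', G.Adj u x ∧ ¬ G.Adj x p)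
    (hNX' : 3 * (Fintype.card V : ℝ) / 16 ≤ (neighborhood G X').card)
    (hp : c * Fintype.card V / 2 ≤ (privateNeighbors G X u p).card) :
    Nonempty (cycleGraph 5 ↪g G) := by
  set F := neighborhood G X' \ (G.neighborFinset u ∪ G.neighborFinset p) with hF
  have hFcard : (Fintype.card V : ℝ) / 16 ≤ F.card := by
    have hsdiff : ((neighborhood G X').card : ℝ) ≤ F.card + (G.degree u + G.degree p) := by
      simp only [← card_neighborFinset_eq_degree]
      exact_mod_cast Finset.card_le_card_sdiff_add_card.trans
        (Nat.add_le_add_left (Finset.card_union_le _ _) _)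
    linarith [hdeg u, hdeg p]
  have hdisj : Disjoint (privateNeighbors G X u p) F := by
    refine Finset.disjoint_left.2 fun e he heF ↦ (Finset.mem_sdiff.1 heF).2 ?_
    exact Finset.mem_union_right _ ((G.mem_neighborFinset p e).2 (mem_privateNeighbors.1 he).2)
  obtain ⟨e, he, d, hd, hed⟩ := hG.exists_adj hc hdisj hp hFcard
  obtain ⟨⟨hue, hXe⟩, hpe⟩ := mem_privateNeighbors.1 he
  simp only [hF, Finset.mem_sdiff, mem_neighborhood, Finset.mem_union, mem_neighborFinset,
    not_or] at hd
  obtain ⟨⟨x, hx, hxd⟩, hud, hpd⟩ := hd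
  refine nonempty_cycleGraph_five_embedding (f := ![u, x, d, e, p]) (fun i ↦ ?_) (fun i ↦ ?_)
  · fin_cases i
    exacts [(hX' x hx).1, hxd, hed.symm, hpe.symm, hup.symm]
  · fin_cases i
    exacts [hud, hXe x (hX'X hx), mt Adj.symm hpd, mt Adj.symm hue, mt Adj.symm (hX' x hx).2]

end Nonempty

lemma exists_le_degree [Nontrivial V] (hG : IsDenseBetweenLarge G c) (hc₀ : 0 < c)
    (hc : c ≤ 1 / 2) : ∃ v, c * Fintype.card V / 2 ≤ G.degree v := by
  have htwo : 2 ≤ Fintype.card V := Fintype.one_lt_card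
  obtain ⟨A, -, hAcard⟩ := Finset.exists_subset_card_eq
    (s := (Finset.univ : Finset V)) (n := Fintype.card V / 2) (Nat.div_le_self _ _)
  have hquarter : (Fintype.card V : ℝ) ≤ 4 * A.card := by
    exact_mod_cast (by omega : Fintype.card V ≤ 4 * A.card)
  have hhalf : (Fintype.card V : ℝ) ≤ 2 * Aᶜ.card := by
    exact_mod_cast (by rw [Finset.card_compl]; omega : Fintype.card V ≤ 2 * Aᶜ.card)
  have hA : c * Fintype.card V / 2 ≤ A.card := by
    have hmul : c * Fintype.card V ≤ 1 / 2 * Fintype.card V := by gcongr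
    linarith
  obtain ⟨v, -, hv⟩ := hG.exists_le_card_filter_adj hc₀ disjoint_compl_right hA (by linarith)
  refine ⟨v, hv.trans ?_⟩
  rw [← card_neighborFinset_eq_degree, neighborFinset_eq_filter]
  gcongr
  exact Finset.subset_univ _

end IsDenseBetweenLarge

theorem c5_in_sparse_dense_graph_general {V : Type*} [Fintype V] [Nontrivial V]
    (G : SimpleGraph V) [DecidableRel G.Adj] {c : ℝ} (hc₀ : 0 < c) (hc : c ≤ 1 / 2)
    (hdeg : ∀ v, (G.degree v : ℝ) ≤ Fintype.card V / 16) (hG : IsDenseBetweenLarge G c) :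
    Nonempty (cycleGraph 5 ↪g G) := by
  obtain ⟨v, hv⟩ := hG.exists_le_degree hc₀ hc
  obtain ⟨X, hXv, hX_ge, hX_le⟩ :=
    hG.exists_subset_neighborFinset_card_neighborhood_mem_Icc hc₀ hdeg hv
  obtain ⟨w, hvw, hw⟩ := hG.exists_le_card_privateNeighbors hc₀ (hdeg v) hX_le subset_rfl hv
  rw [mem_neighborFinset] at hvw
  have hadj : ∀ x ∈ X, G.Adj v x := fun x hx ↦ (G.mem_neighborFinset v x).1 (hXv hx)
  rcases le_or_gt (3 * (Fintype.card V : ℝ) / 16) (neighborhood G {x ∈ X | ¬ G.Adj x w}).card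
    with hfar | hfar
  · refine hG.nonempty_embedding_of_privateNeighbors hc₀ hdeg hvw (X.filter_subset _) ?_ hfar hw
    exact fun x hx ↦ (Finset.mem_filter.1 hx).imp_left (hadj x)
  · have hnear : 3 * (Fintype.card V : ℝ) / 16 ≤ (neighborhood G {x ∈ X | G.Adj x w}).card := by
      have hsplit : ((neighborhood G X).card : ℝ) ≤ (neighborhood G {x ∈ X | G.Adj x w}).card +
          (neighborhood G {x ∈ X | ¬ G.Adj x w}).card := by
        exact_mod_cast card_neighborhood_le_add_filter X _
      linarith
    have hYw : privateNeighbors G X v w ⊆ G.neighborFinset w := fun y hy ↦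
      (G.mem_neighborFinset w y).2 (mem_privateNeighbors.1 hy).2
    obtain ⟨y, hyY, hy⟩ := hG.exists_le_card_privateNeighbors hc₀ (hdeg w) hX_le hYw hw
    obtain ⟨⟨-, hXy⟩, hwy⟩ := mem_privateNeighbors.1 hyY
    refine hG.nonempty_embedding_of_privateNeighbors hc₀ hdeg hwy (X.filter_subset _) ?_ hnear hy
    exact fun x hx ↦
      ⟨(Finset.mem_filter.1 hx).2.symm, hXy x (Finset.mem_filter.1 hx).1⟩

/-- If `0 < c ≤ 1/2` and `G` is a graph on `n > 0` vertices in which every vertex has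
closed degree (degree plus one) at most `n/16`, and for every two disjoint vertex subsets
`A, B` with `|A| ≥ cn/2` and `|B| ≥ n/16` the edge-density between `A` and `B` is at
least `c`, then `G` contains `C₅` as an induced subgraph. -/
theorem c5_in_sparse_dense_graph (c : ℝ) (hc0 : 0 < c) (hc : c ≤ 1 / 2)
    (n : ℕ) (hn : 0 < n) (G : SimpleGraph (Fin n))
    (hdeg : ∀ v : Fin n, ((G.degree v : ℝ) + 1) ≤ (n : ℝ) / 16)
    (hdens : ∀ A B : Finset (Fin n), Disjoint A B →
      c * n / 2 ≤ (A.card : ℝ) → (n : ℝ) / 16 ≤ (B.card : ℝ) →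
      c ≤ (G.edgeDensity A B : ℝ)) :
    Nonempty (cycleGraph 5 ↪g G) := by
  have hcard : (2 : ℝ) ≤ n := by
    linarith [hdeg ⟨0, hn⟩, (G.degree ⟨0, hn⟩).cast_nonneg (α := ℝ)]
  have : Nontrivial (Fin n) := Fin.nontrivial_iff_two_le.2 (by exact_mod_cast hcard)
  exact c5_in_sparse_dense_graph_general G hc0 hc
    (fun v ↦ by rw [Fintype.card_fin]; linarith [hdeg v])
    (by simpa only [IsDenseBetweenLarge, Fintype.card_fin] using hdens)
end

section
/- For every graph H with h vertices and every real d with 0 < d ≤ 1/2, setting δ = 2^{−15·h·(log(1/d))²}, every H-free graph G contains a subset X ⊆ V(G) with |X| ≥ δ·|V(G)| such that in one of the induced subgraph G[X] or the induced subgraph of the complement graph of G on X, every vertex has degree at most d·|X|. -/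
open SimpleGraph
open scoped Classical

/-!
If a greedy embedding of `H` into a set `U` gets stuck, some vertex of `H` still to be embedded has
a candidate set `B` in which many vertices of `U` have few neighbours, or few non-neighbours.
So an `H`-free graph or its complement has a sparse pair `(A, B)` in every `U`, with `A` and `B`
of size at least about `ε ^ h * |U|`.

Edge densities are averaged over probability weights instead of sets: a weight with all values at
most `1 / s` plays the role of a set of size `s`, so that sets of different sizes never need to be
balanced.  If `(A, B)` is sparse, averaging a weight on `A` with one on half of `B` reduces the
density from `3ρ/2` to `ρ`.  Alternating between the graph and its complement, about
`log (1/d)` rounds turn the trivial bound (the two densities add up to at most one) into a weight of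
density at most `3d/4`.

Finally `x ↦ d (∑ x)² - xᵀ A x` is convex in every coordinate, so rounding the weight to a set does
not decrease it, and a set which maximises it has all degrees at most `d |X|`.
-/

namespace Rodl

open Finset Matrix

/-! ### Sparse pairs in `H`-free graphs -/

section SparsePair

variable {V : Type*}

/-- Every vertex of `A` has at most a proportion `ε` of the set `B` as neighbours in `G`; the sets
need not be disjoint, and only the degrees from `A` to `B` are controlled. -/
def SparsePair (G : SimpleGraph V) (ε : ℝ) (A B : Finset V) : Prop :=
  ∀ v ∈ A, (#{u ∈ B | G.Adj v u} : ℝ) ≤ ε * #B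

lemma exists_sparsePair_of_forall_exists_le {ι : Type*} [Fintype ι] [Nonempty ι]
    (R : ι → SimpleGraph V) (B : ι → Finset V) {A : Finset V} {ε b : ℝ}
    (hA : ∀ v ∈ A, ∃ i, (#{u ∈ B i | (R i).Adj v u} : ℝ) ≤ ε * #(B i))
    (hb : Fintype.card ι * b ≤ #A) :
    ∃ i, ∃ A' ⊆ A, b ≤ #A' ∧ SparsePair (R i) ε A' (B i) := by
  choose! i hi using hA
  obtain ⟨j, -, hj⟩ : ∃ j ∈ univ, b ≤ #{v ∈ A | i v = j} :=
    exists_le_card_fiber_of_nsmul_le_card_of_maps_to (fun v _ => mem_univ (i v)) univ_nonempty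
      (by simpa using hb)
  refine ⟨j, {v ∈ A | i v = j}, filter_subset _ _, hj, fun v hv => ?_⟩
  obtain ⟨hvA, rfl⟩ := mem_filter.1 hv
  exact hi v hvA

lemma adj_ite_compl_iff (G : SimpleGraph V) (p : Prop) (u v : V) :
    (if p then G else Gᶜ).Adj u v ↔ u ≠ v ∧ (G.Adj u v ↔ p) := by
  by_cases hp : p
  · simpa [hp] using fun h : G.Adj u v => h.ne
  · simp [hp]

lemma exists_embedding_eq_cons {h : ℕ} {H : SimpleGraph (Fin (h + 1))} {G : SimpleGraph V}
    (f : H.comap Fin.succ ↪g G) {v : V} (hv : ∀ i, v ≠ f i ∧ (G.Adj v (f i) ↔ H.Adj 0 i.succ)) :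
    ∃ g : H ↪g G, ⇑g = Fin.cons v f := by
  have hinj : Function.Injective (Fin.cons v f : Fin (h + 1) → V) :=
    Fin.cons_injective_iff.2 ⟨fun ⟨i, hi⟩ => (hv i).1 hi.symm, f.injective⟩
  refine ⟨⟨⟨Fin.cons v f, hinj⟩, @fun i j => ?_⟩, rfl⟩
  cases i using Fin.cases <;> cases j using Fin.cases
  · simp
  · simpa using (hv _).2
  · simpa [G.adj_comm, H.adj_comm] using (hv _).2
  · simp

lemma natCast_mul_pow_succ_le_one {ε : ℝ} (hε0 : 0 ≤ ε) (hε : ε ≤ 1 / 2) (n : ℕ) :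
    n * ε ^ (n + 1) ≤ 1 :=
  calc n * ε ^ (n + 1) ≤ 2 ^ (n + 1) * (1 / 2) ^ (n + 1) := by
        gcongr
        exact_mod_cast (n.lt_succ_self.trans Nat.lt_two_pow_self).le
    _ = 1 := by rw [← mul_pow]; norm_num

lemma exists_forall_le_or_sparsePair (G : SimpleGraph V) {ε s : ℝ} (hε0 : 0 < ε) (hε : ε ≤ 1 / 2)
    {h : ℕ} (H : SimpleGraph (Fin (h + 1))) (hs : 0 < s) (C : Fin (h + 1) → Finset V)
    (hC : ∀ i, s ≤ #(C i)) :
    (∃ v ∈ C 0, ∀ i : Fin h, ε * s ≤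
      #{u ∈ C i.succ | (if H.Adj 0 i.succ then G else Gᶜ).Adj v u}) ∨
    ∃ i, ∃ A ⊆ C 0, ε ^ (h + 1) * s ≤ #A ∧
      (SparsePair G ε A (C i) ∨ SparsePair Gᶜ ε A (C i)) := by
  let R : Fin h → SimpleGraph V := fun i => if H.Adj 0 i.succ then G else Gᶜ
  refine or_iff_not_imp_left.2 fun hstuck => ?_
  have hfew : ∀ v ∈ C 0, ∃ i, (#{u ∈ C (Fin.succ i) | (R i).Adj v u} : ℝ) ≤ ε * #(C i.succ) := by
    push Not at hstuck
    intro v hv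
    obtain ⟨i, hi⟩ := hstuck v hv
    exact ⟨i, hi.le.trans (by gcongr; exact hC _)⟩
  obtain ⟨v, hv⟩ : (C 0).Nonempty := card_pos.1 (by exact_mod_cast hs.trans_le (hC 0))
  have : Nonempty (Fin h) := (hfew v hv).nonempty
  obtain ⟨i, A, hA, hcard, hsparse⟩ := exists_sparsePair_of_forall_exists_le R (C ∘ Fin.succ)
    hfew (b := ε ^ (h + 1) * s) <|
      calc Fintype.card (Fin h) * (ε ^ (h + 1) * s) = h * ε ^ (h + 1) * s := by simp [mul_assoc]
        _ ≤ 1 * s := by gcongr; exact natCast_mul_pow_succ_le_one hε0.le hε h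
        _ ≤ #(C 0) := by rw [one_mul]; exact hC 0
  refine ⟨i.succ, A, hA, hcard, ?_⟩
  by_cases hi : H.Adj 0 i.succ
  · exact .inl (by simpa [R, hi] using hsparse)
  · exact .inr (by simpa [R, hi] using hsparse)

lemma exists_embedding_or_sparsePair (G : SimpleGraph V) {ε : ℝ} (hε0 : 0 < ε) (hε : ε ≤ 1 / 2) :
    ∀ {h : ℕ} (H : SimpleGraph (Fin h)) {s : ℝ}, 0 < s → ∀ C : Fin h → Finset V,
      (∀ i, s ≤ #(C i)) →
      (∃ f : H ↪g G, ∀ i, f i ∈ C i) ∨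
      ∃ i j, ∃ A ⊆ C i, ∃ B ⊆ C j, ε ^ h * s ≤ #A ∧ 2 * (ε ^ h * s) ≤ #B ∧
        (SparsePair G ε A B ∨ SparsePair Gᶜ ε A B) := by
  intro h
  induction h with
  | zero => exact fun H s _ C _ => .inl ⟨(IsIndContained.of_isEmpty : H ⊴ G).some, finZeroElim⟩
  | succ h ih =>
    intro H s hs C hC
    obtain ⟨v, hv, hmany⟩ | ⟨j, A, hA, hAcard, hsparse⟩ :=
      exists_forall_le_or_sparsePair G hε0 hε H hs C hC
    · obtain ⟨f, hf⟩ | ⟨i, j, A, hA, B, hB, hAcard, hBcard, hsparse⟩ :=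
        ih (H.comap Fin.succ) (mul_pos hε0 hs) _ hmany
      · obtain ⟨g, hg⟩ := exists_embedding_eq_cons f fun i =>
          (adj_ite_compl_iff G _ v (f i)).1 (mem_filter.1 (hf i)).2
        refine .inl ⟨g, Fin.cases ?_ fun i => ?_⟩
        · simpa [hg] using hv
        · simpa [hg] using (mem_filter.1 (hf i)).1
      · rw [← mul_assoc (ε ^ h), ← pow_succ] at hAcard hBcard
        exact .inr ⟨_, _, A, hA.trans (filter_subset _ _), B, hB.trans (filter_subset _ _),
          hAcard, hBcard, hsparse⟩
    · refine .inr ⟨0, j, A, hA, C j, Subset.rfl, hAcard, ?_, hsparse⟩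
      calc 2 * (ε ^ (h + 1) * s) = ε ^ h * (2 * ε) * s := by ring
        _ ≤ 1 * 1 * s := by
          gcongr
          · exact pow_le_one₀ hε0.le (by linarith)
          · linarith
        _ ≤ #(C j) := by simpa using hC j

lemma exists_sparsePair_of_not_isIndContained {G : SimpleGraph V} {ε : ℝ} (hε0 : 0 < ε)
    (hε : ε ≤ 1 / 2) {W : Type*} [Fintype W] {H : SimpleGraph W} (hG : ¬ H ⊴ G)
    {U : Finset V} (hU : U.Nonempty) :
    ∃ A ⊆ U, ∃ B ⊆ U, ε ^ Fintype.card W * #U ≤ #A ∧ 2 * (ε ^ Fintype.card W * #U) ≤ #B ∧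
      (SparsePair G ε A B ∨ SparsePair Gᶜ ε A B) := by
  obtain ⟨f, -⟩ | ⟨-, -, hpair⟩ := exists_embedding_or_sparsePair G hε0 hε (H.overFin rfl)
    (Nat.cast_pos.2 hU.card_pos) (fun _ => U) fun _ => le_rfl
  · exact absurd ⟨f.comp (H.overFinIso rfl).toEmbedding⟩ hG
  · exact hpair

end SparsePair

/-! ### Densities with respect to spread-out weights -/

section Weights

variable {V : Type*} [Fintype V] {G G' : SimpleGraph V} {U A B : Finset V} {μ ν : V → ℝ}
  {s ε ρ ρ' : ℝ}

/-- A probability weight on `U` with values at most `1 / s`: the fractional counterpart of the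
uniform weight on a subset of `U` of size `s`. -/
structure IsSpread (U : Finset V) (s : ℝ) (μ : V → ℝ) : Prop where
  mem_stdSimplex : μ ∈ stdSimplex ℝ V
  mul_le_one : ∀ v, s * μ v ≤ 1
  eq_zero_of_notMem : ∀ v ∉ U, μ v = 0

/-- Some weight on `U` spread over size `s` has edge density at most `ρ` in `G`: the fractional
counterpart of a subset of `U` of size `s` and edge density at most `ρ`. -/
def HasSparseWeight (G : SimpleGraph V) (ρ : ℝ) (U : Finset V) (s : ℝ) : Prop :=
  ∃ μ, IsSpread U s μ ∧ μ ⬝ᵥ G.adjMatrix ℝ *ᵥ μ ≤ ρ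

lemma IsSpread.mono (hμ : IsSpread U s μ) {U' : Finset V} (hU : U ⊆ U') {s' : ℝ} (hs : s' ≤ s) :
    IsSpread U' s' μ where
  mem_stdSimplex := hμ.mem_stdSimplex
  mul_le_one v := (mul_le_mul_of_nonneg_right hs (hμ.mem_stdSimplex.1 v)).trans (hμ.mul_le_one v)
  eq_zero_of_notMem v hv := hμ.eq_zero_of_notMem v fun h => hv (hU h)

lemma HasSparseWeight.mono (h : HasSparseWeight G ρ U s) (hρ : ρ ≤ ρ') {U' : Finset V}
    (hU : U ⊆ U') {s' : ℝ} (hs : s' ≤ s) : HasSparseWeight G ρ' U' s' :=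
  let ⟨μ, hμ, hμρ⟩ := h
  ⟨μ, hμ.mono hU hs, hμρ.trans hρ⟩

lemma IsSpread.average (hμ : IsSpread U s μ) (hν : IsSpread U s ν) :
    IsSpread U s ((1 / 2 : ℝ) • μ + (1 / 2 : ℝ) • ν) where
  mem_stdSimplex := convex_stdSimplex ℝ V hμ.mem_stdSimplex hν.mem_stdSimplex
    (by norm_num) (by norm_num) (by norm_num)
  mul_le_one v := by
    have := hμ.mul_le_one v
    have := hν.mul_le_one v
    simp only [Pi.add_apply, Pi.smul_apply, smul_eq_mul]
    linarith
  eq_zero_of_notMem v hv := by simp [hμ.eq_zero_of_notMem v hv, hν.eq_zero_of_notMem v hv]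

lemma IsSpread.dotProduct_le (hμ : IsSpread U s μ) {g : V → ℝ} {c : ℝ} (hg : ∀ v ∈ U, g v ≤ c) :
    μ ⬝ᵥ g ≤ c :=
  calc μ ⬝ᵥ g ≤ ∑ v, μ v * c := by
        refine sum_le_sum fun v _ => ?_
        by_cases hv : v ∈ U
        · exact mul_le_mul_of_nonneg_left (hg v hv) (hμ.mem_stdSimplex.1 v)
        · simp [hμ.eq_zero_of_notMem v hv]
    _ = c := by rw [← sum_mul, hμ.mem_stdSimplex.2, one_mul]

lemma isSpread_uniform (hU : U.Nonempty) :
    IsSpread U #U ((U : Set V).indicator fun _ => (#U : ℝ)⁻¹) where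
  mem_stdSimplex :=
    ⟨Set.indicator_nonneg fun _ _ => by positivity, by
      simp [Set.indicator_apply, hU.card_ne_zero]⟩
  mul_le_one v := by
    by_cases hv : v ∈ U <;> simp [hv, hU.card_ne_zero]
  eq_zero_of_notMem v hv := by simp [hv]

lemma dotProduct_adjMatrix_mulVec_comm (G : SimpleGraph V) (x y : V → ℝ) :
    x ⬝ᵥ G.adjMatrix ℝ *ᵥ y = y ⬝ᵥ G.adjMatrix ℝ *ᵥ x := by
  rw [dotProduct_mulVec, ← mulVec_transpose, transpose_adjMatrix, dotProduct_comm]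

lemma dotProduct_adjMatrix_mulVec_nonneg (G : SimpleGraph V) {x y : V → ℝ} (hx : 0 ≤ x)
    (hy : 0 ≤ y) : 0 ≤ x ⬝ᵥ G.adjMatrix ℝ *ᵥ y := by
  refine dotProduct_nonneg_of_nonneg hx fun v => ?_
  simpa [adjMatrix_mulVec_apply] using sum_nonneg fun u _ => hy u

lemma adjMatrix_mulVec_indicator (G : SimpleGraph V) (X : Finset V) (v : V) :
    (G.adjMatrix ℝ *ᵥ (X : Set V).indicator 1) v = #{u ∈ X | G.Adj v u} := by
  simp [mulVec, dotProduct, Set.indicator_apply]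

lemma IsSpread.adjMatrix_density_add_le_one (hG : Disjoint G G') (hμ : IsSpread U s μ) :
    μ ⬝ᵥ G.adjMatrix ℝ *ᵥ μ + μ ⬝ᵥ G'.adjMatrix ℝ *ᵥ μ ≤ 1 := by
  rw [← dotProduct_add, ← add_mulVec]
  refine hμ.dotProduct_le fun v _ => ?_
  rw [mulVec, dotProduct_comm]
  refine hμ.dotProduct_le fun u _ => ?_
  by_cases hvu : G.Adj v u
  · simp [hvu, SimpleGraph.disjoint_left.1 hG v u hvu]
  · simp only [Matrix.add_apply, adjMatrix_apply, if_neg hvu, zero_add]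
    split_ifs <;> simp

lemma hasSparseWeight_or_of_disjoint (hG : Disjoint G G') (hρ : 1 ≤ ρ + ρ') (hU : U.Nonempty) :
    HasSparseWeight G ρ U #U ∨ HasSparseWeight G' ρ' U #U := by
  have hμ := isSpread_uniform hU
  have hsum := hμ.adjMatrix_density_add_le_one hG
  obtain hρμ | hρμ := le_or_gt (_ ⬝ᵥ G.adjMatrix ℝ *ᵥ _) ρ
  · exact .inl ⟨_, hμ, hρμ⟩
  · exact .inr ⟨_, hμ, by linarith⟩

lemma card_le_two_mul_card_filter_le {ι : Type*} {B : Finset ι} {g : ι → ℝ} (hε : 0 < ε)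
    (hg : ∀ b ∈ B, 0 ≤ g b) (hsum : ∑ b ∈ B, g b ≤ ε * #B) :
    (#B : ℝ) ≤ 2 * #{b ∈ B | g b ≤ 2 * ε} := by
  have hmarkov : #{b ∈ B | ¬ g b ≤ 2 * ε} * (2 * ε) ≤ ε * #B :=
    calc #{b ∈ B | ¬ g b ≤ 2 * ε} * (2 * ε) ≤ ∑ b ∈ B with ¬ g b ≤ 2 * ε, g b := by
          simpa using card_nsmul_le_sum _ g (2 * ε) fun b hb => (not_le.1 (mem_filter.1 hb).2).le
      _ ≤ ∑ b ∈ B, g b := sum_le_sum_of_subset_of_nonneg (filter_subset _ _) fun b hb _ => hg b hb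
      _ ≤ ε * #B := hsum
  have hsplit : (#{b ∈ B | g b ≤ 2 * ε} : ℝ) + #{b ∈ B | ¬ g b ≤ 2 * ε} = #B := by
    exact_mod_cast card_filter_add_card_filter_not _
  have : 2 * (#{b ∈ B | ¬ g b ≤ 2 * ε} : ℝ) ≤ #B := le_of_mul_le_mul_left (by linarith) hε
  linarith

lemma SparsePair.card_le_two_mul_card_filter (hAB : SparsePair G ε A B) (hε : 0 < ε)
    (hμ : IsSpread A s μ) : (#B : ℝ) ≤ 2 * #{b ∈ B | (G.adjMatrix ℝ *ᵥ μ) b ≤ 2 * ε} := by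
  refine card_le_two_mul_card_filter_le hε (fun b _ => ?_) ?_
  · simpa [adjMatrix_mulVec_apply] using sum_nonneg fun u _ => hμ.mem_stdSimplex.1 u
  · calc ∑ b ∈ B, (G.adjMatrix ℝ *ᵥ μ) b
        = (B : Set V).indicator 1 ⬝ᵥ G.adjMatrix ℝ *ᵥ μ := by
          simp [dotProduct, Set.indicator_apply]
      _ = μ ⬝ᵥ G.adjMatrix ℝ *ᵥ (B : Set V).indicator 1 := dotProduct_adjMatrix_mulVec_comm ..
      _ ≤ ε * #B := hμ.dotProduct_le fun v hv => by
          simpa only [adjMatrix_mulVec_indicator] using hAB v hv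

lemma SparsePair.exists_subset_forall_hasSparseWeight (hAB : SparsePair G ε A B) (hε : 0 < ε)
    (hA : HasSparseWeight G ρ A s) :
    ∃ B' ⊆ B, (#B : ℝ) ≤ 2 * #B' ∧
      (HasSparseWeight G ρ B' s → HasSparseWeight G (ρ / 2 + ε) (A ∪ B) s) := by
  obtain ⟨μ, hμ, hμρ⟩ := hA
  refine ⟨_, filter_subset _ _, hAB.card_le_two_mul_card_filter hε hμ, ?_⟩
  rintro ⟨ν, hν, hνρ⟩
  have hcross : ν ⬝ᵥ G.adjMatrix ℝ *ᵥ μ ≤ 2 * ε :=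
    hν.dotProduct_le fun b hb => (mem_filter.1 hb).2
  refine ⟨_, (hμ.mono subset_union_left le_rfl).average
    (hν.mono ((filter_subset _ _).trans subset_union_right) le_rfl), ?_⟩
  simp only [mulVec_add, mulVec_smul, dotProduct_add, add_dotProduct, smul_dotProduct,
    dotProduct_smul, smul_eq_mul, dotProduct_adjMatrix_mulVec_comm G μ ν]
  linarith

/-! ### Alternating between a graph and its complement -/

lemma SparsePair.hasSparseWeight_or (hAB : SparsePair G ε A B) (hε : 0 < ε) (hερ : 4 * ε ≤ ρ)
    (hAU : A ⊆ U) (hBU : B ⊆ U) {c m : ℝ} (hc : 0 ≤ c) (hm : 0 < m) (hA : m ≤ #A)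
    (hB : 2 * m ≤ #B)
    (ih : ∀ W : Finset V, W.Nonempty →
      HasSparseWeight G (3 / 2 * ρ) W (c * #W) ∨ HasSparseWeight G' ρ' W (c * #W)) :
    HasSparseWeight G ρ U (c * m) ∨ HasSparseWeight G' ρ' U (c * m) := by
  have hlarge : ∀ W ⊆ U, m ≤ #W →
      HasSparseWeight G (3 / 2 * ρ) W (c * m) ∨ HasSparseWeight G' ρ' U (c * m) := by
    intro W hWU hW
    have hcW : c * m ≤ c * #W := by gcongr
    exact (ih W (card_pos.1 (by exact_mod_cast hm.trans_le hW))).imp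
      (fun h => h.mono le_rfl Subset.rfl hcW) (fun h => h.mono le_rfl hWU hcW)
  obtain hGA | hG' := hlarge A hAU hA
  · obtain ⟨B', hB'B, hB', hunion⟩ := hAB.exists_subset_forall_hasSparseWeight hε hGA
    exact (hlarge B' (hB'B.trans hBU) (by linarith)).imp_left fun hGB =>
      (hunion hGB).mono (by linarith) (union_subset hAU hBU) le_rfl
  · exact .inr hG'

theorem hasSparseWeight_or_of_forall_sparsePair (hG : Disjoint G G') (hε : 0 < ε) {k : ℝ}
    (hk : 0 < k)
    (hpair : ∀ U : Finset V, U.Nonempty → ∃ A ⊆ U, ∃ B ⊆ U, k * #U ≤ #A ∧ 2 * (k * #U) ≤ #B ∧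
      (SparsePair G ε A B ∨ SparsePair G' ε A B)) (t : ℕ) :
    ∀ {ρ ρ' : ℝ}, 4 * ε ≤ ρ → 4 * ε ≤ ρ' → 1 ≤ 4 * (ρ * ρ') * (3 / 2) ^ t →
      ∀ U : Finset V, U.Nonempty →
        HasSparseWeight G ρ U (k ^ t * #U) ∨ HasSparseWeight G' ρ' U (k ^ t * #U) := by
  induction t with
  | zero =>
    intro ρ ρ' hρ hρ' hprod U hU
    have hsum : 1 ≤ ρ + ρ' := by nlinarith [sq_nonneg (ρ - ρ')]
    simpa using hasSparseWeight_or_of_disjoint hG hsum hU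
  | succ t ih =>
    intro ρ ρ' hρ hρ' hprod U hU
    obtain ⟨A, hAU, B, hBU, hA, hB, hAB⟩ := hpair U hU
    have hkU : 0 < k * #U := mul_pos hk (Nat.cast_pos.2 hU.card_pos)
    rw [pow_succ] at hprod
    rw [pow_succ, mul_assoc]
    obtain hAB | hAB := hAB
    · exact hAB.hasSparseWeight_or hε hρ hAU hBU (by positivity) hkU hA hB
        (ih (by linarith) hρ' (by linarith))
    · exact (hAB.hasSparseWeight_or hε hρ' hAU hBU (by positivity) hkU hA hB fun W hW =>
        (ih hρ (by linarith) (by linarith) W hW).symm).symm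

end Weights

/-! ### Rounding a weight to a set -/

section Rounding

open Function (update)

lemma exists_le_indicator_of_convexOn_update {ι : Type*} [Finite ι] {f : (ι → ℝ) → ℝ}
    (hf : ∀ x i, ConvexOn ℝ (Set.Icc 0 1) fun t => f (update x i t)) {w : ι → ℝ}
    (hw : ∀ i, w i ∈ Set.Icc (0 : ℝ) 1) : ∃ Y : Finset ι, f w ≤ f ((Y : Set ι).indicator 1) := by
  cases nonempty_fintype ι
  have hround : ∀ S : Finset ι, ∃ x : ι → ℝ, (∀ i, x i ∈ Set.Icc (0 : ℝ) 1) ∧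
      (∀ i ∈ S, x i = 0 ∨ x i = 1) ∧ f w ≤ f x := by
    intro S
    induction S using Finset.induction_on with
    | empty => exact ⟨w, hw, by simp, le_rfl⟩
    | insert a S _ ih =>
      obtain ⟨x, hx, hxS, hwx⟩ := ih
      obtain ⟨c, hc, hxc⟩ : ∃ c : ℝ, (c = 0 ∨ c = 1) ∧ f x ≤ f (update x a c) := by
        have hmax := (hf x a).le_max_of_mem_Icc (by simp) (by simp) (hx a)
        rw [Function.update_eq_self, le_max_iff] at hmax
        exact hmax.elim (fun h => ⟨0, .inl rfl, h⟩) fun h => ⟨1, .inr rfl, h⟩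
      refine ⟨update x a c, fun i => ?_, fun i hi => ?_, hwx.trans hxc⟩ <;>
        obtain rfl | hia := eq_or_ne i a
      · obtain rfl | rfl := hc <;> simp
      · simpa [hia] using hx i
      · simpa using hc
      · simpa [hia] using hxS i (mem_of_mem_insert_of_ne hi hia)
  obtain ⟨x, -, hx, hwx⟩ := hround univ
  have hxY : ((({i | x i = 1} : Finset ι) : Set ι).indicator 1) = x := by
    ext i
    obtain hi | hi := hx i (mem_univ i) <;> simp [hi]
  exact ⟨_, hwx.trans_eq (congrArg f hxY.symm)⟩

lemma convexOn_Icc_quadratic {a b c : ℝ} (hc : 0 ≤ c) :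
    ConvexOn ℝ (Set.Icc 0 1) fun t => a + t * b + t ^ 2 * c := by
  refine ⟨convex_Icc 0 1, fun x _ y _ p q hp hq hpq => ?_⟩
  obtain rfl : q = 1 - p := by linarith
  simp only [smul_eq_mul]
  nlinarith [mul_nonneg (mul_nonneg hp hq) (mul_nonneg hc (sq_nonneg (x - y)))]

variable {V : Type*} [Fintype V]

/-- How far the edge count `x ⬝ᵥ A *ᵥ x` of a weight `x` falls short of density `d`.  The adjacency
matrix `A` has zero diagonal, so this is convex in every coordinate when `0 ≤ d`. -/
noncomputable def densityDeficit (G : SimpleGraph V) (d : ℝ) (x : V → ℝ) : ℝ :=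
  d * (∑ v, x v) ^ 2 - x ⬝ᵥ G.adjMatrix ℝ *ᵥ x

lemma densityDeficit_smul (G : SimpleGraph V) (d s : ℝ) (x : V → ℝ) :
    densityDeficit G d (s • x) = s ^ 2 * densityDeficit G d x := by
  simp only [densityDeficit, Pi.smul_apply, smul_eq_mul, ← mul_sum, mulVec_smul, smul_dotProduct,
    dotProduct_smul]
  ring

lemma densityDeficit_add_smul_single (G : SimpleGraph V) (d : ℝ) (x : V → ℝ) (v : V) (t : ℝ) :
    densityDeficit G d (x + t • Pi.single v 1) = densityDeficit G d x +
      t * (2 * (d * ∑ u, x u - (G.adjMatrix ℝ *ᵥ x) v)) + t ^ 2 * d := by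
  have hdiag : (G.adjMatrix ℝ *ᵥ Pi.single v 1) v = 0 := by simp
  have hcross : x ⬝ᵥ G.adjMatrix ℝ *ᵥ Pi.single v 1 = (G.adjMatrix ℝ *ᵥ x) v := by
    rw [dotProduct_adjMatrix_mulVec_comm, single_one_dotProduct]
  simp only [densityDeficit, Pi.add_apply, Pi.smul_apply, smul_eq_mul, sum_add_distrib, ← mul_sum,
    sum_pi_single', mem_univ, if_true, mulVec_add, mulVec_smul, dotProduct_add, add_dotProduct,
    smul_dotProduct, dotProduct_smul, single_one_dotProduct, hcross, hdiag]
  ring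

lemma convexOn_densityDeficit_update (G : SimpleGraph V) {d : ℝ} (hd : 0 ≤ d) (x : V → ℝ) (v : V) :
    ConvexOn ℝ (Set.Icc 0 1) fun t => densityDeficit G d (update x v t) := by
  have hupdate : ∀ t, update x v t = update x v 0 + t • Pi.single v 1 := by
    intro t
    ext u
    simp only [Pi.add_apply, Pi.smul_apply, smul_eq_mul, Function.update_apply, Pi.single_apply]
    split_ifs <;> ring
  exact (convexOn_Icc_quadratic hd).congr fun t _ => by
    rw [hupdate t, densityDeficit_add_smul_single]

lemma densityDeficit_indicator_le (G : SimpleGraph V) (d : ℝ) (X : Finset V) :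
    densityDeficit G d ((X : Set V).indicator 1) ≤ d * #X ^ 2 := by
  have hnonneg : (0 : V → ℝ) ≤ (X : Set V).indicator 1 :=
    Set.indicator_nonneg fun _ _ => zero_le_one
  have hsum : ∑ v, (X : Set V).indicator (1 : V → ℝ) v = #X := by simp [Set.indicator_apply]
  rw [densityDeficit, hsum]
  exact sub_le_self _ (dotProduct_adjMatrix_mulVec_nonneg G hnonneg hnonneg)

lemma card_filter_adj_le_of_forall_densityDeficit_le {G : SimpleGraph V} {d : ℝ} (hd : 0 ≤ d)
    {X : Finset V} (hX : ∀ Y : Finset V, densityDeficit G d ((Y : Set V).indicator 1) ≤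
      densityDeficit G d ((X : Set V).indicator 1)) {v : V} (hv : v ∈ X) :
    (#{u ∈ X | G.Adj v u} : ℝ) ≤ d * #X := by
  have herase : ((X.erase v : Finset V) : Set V).indicator (1 : V → ℝ) =
      (X : Set V).indicator 1 + (-1 : ℝ) • Pi.single v 1 := by
    ext u
    obtain rfl | huv := eq_or_ne u v
    · simp [hv]
    · simp [Set.indicator_apply, huv]
  have hsum : ∑ v, (X : Set V).indicator (1 : V → ℝ) v = #X := by simp [Set.indicator_apply]
  have hle := hX (X.erase v)
  rw [herase, densityDeficit_add_smul_single, adjMatrix_mulVec_indicator, hsum] at hle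
  linarith

theorem HasSparseWeight.exists_forall_card_filter_adj_le {G : SimpleGraph V} {ρ s d : ℝ}
    {U : Finset V} (h : HasSparseWeight G ρ U s) (hs : 0 ≤ s) (hd : 0 ≤ d) :
    ∃ X : Finset V, s ^ 2 * (d - ρ) ≤ d * #X ^ 2 ∧
      ∀ v ∈ X, (#{u ∈ X | G.Adj v u} : ℝ) ≤ d * #X := by
  obtain ⟨μ, hμ, hμρ⟩ := h
  obtain ⟨Y, hY⟩ := exists_le_indicator_of_convexOn_update (convexOn_densityDeficit_update G hd)
    (w := s • μ) fun v => ⟨mul_nonneg hs (hμ.mem_stdSimplex.1 v), hμ.mul_le_one v⟩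
  obtain ⟨X, -, hX⟩ := exists_max_image (univ : Finset (Finset V))
    (fun Y => densityDeficit G d ((Y : Set V).indicator 1)) univ_nonempty
  refine ⟨X, ?_, fun v =>
    card_filter_adj_le_of_forall_densityDeficit_le hd fun Y => hX Y (mem_univ Y)⟩
  calc s ^ 2 * (d - ρ) ≤ s ^ 2 * densityDeficit G d μ := by
        rw [densityDeficit, hμ.mem_stdSimplex.2]
        gcongr
        linarith
    _ = densityDeficit G d (s • μ) := (densityDeficit_smul G d s μ).symm
    _ ≤ densityDeficit G d ((Y : Set V).indicator 1) := hY
    _ ≤ densityDeficit G d ((X : Set V).indicator 1) := hX Y (mem_univ Y)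
    _ ≤ d * #X ^ 2 := densityDeficit_indicator_le G d X

theorem HasSparseWeight.exists_half_le_card {G : SimpleGraph V} {s d : ℝ} {U : Finset V}
    (h : HasSparseWeight G (3 / 4 * d) U s) (hs : 0 ≤ s) (hd : 0 < d) :
    ∃ X : Finset V, s / 2 ≤ #X ∧ ∀ v ∈ X, (#{u ∈ X | G.Adj v u} : ℝ) ≤ d * #X := by
  obtain ⟨X, hcard, hX⟩ := h.exists_forall_card_filter_adj_le hs hd.le
  refine ⟨X, le_of_sq_le_sq (le_of_mul_le_mul_left ?_ hd) (by positivity), hX⟩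
  linarith

theorem exists_forall_card_filter_adj_le_or {G : SimpleGraph V} {W : Type*} [Fintype W]
    {H : SimpleGraph W} (hG : ¬ H ⊴ G) {d : ℝ} (hd0 : 0 < d) (hd : d ≤ 1 / 2) {t : ℕ}
    (ht : 1 ≤ d ^ 2 * (3 / 2) ^ (t + 2)) :
    ∃ X : Finset V, ((3 / 16 * d) ^ Fintype.card W) ^ t / 2 * Fintype.card V ≤ #X ∧
      ((∀ v ∈ X, (#{u ∈ X | G.Adj v u} : ℝ) ≤ d * #X) ∨
        ∀ v ∈ X, (#{u ∈ X | Gᶜ.Adj v u} : ℝ) ≤ d * #X) := by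
  obtain _ | _ := isEmpty_or_nonempty V
  · exact ⟨∅, by simp⟩
  have hsparse : HasSparseWeight G (3 / 4 * d) univ (((3 / 16 * d) ^ Fintype.card W) ^ t * #univ) ∨
      HasSparseWeight Gᶜ (3 / 4 * d) univ (((3 / 16 * d) ^ Fintype.card W) ^ t * #univ) :=
    hasSparseWeight_or_of_forall_sparsePair disjoint_compl_right (ε := 3 / 16 * d)
      (by positivity) (by positivity)
      (fun U hU => exists_sparsePair_of_not_isIndContained (by positivity) (by linarith) hG hU) t
      (by linarith) (by linarith) (by rw [pow_add] at ht; linarith) univ univ_nonempty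
  rw [div_mul_eq_mul_div, ← card_univ]
  obtain hsparse | hsparse := hsparse
  · obtain ⟨X, hcard, hX⟩ := hsparse.exists_half_le_card (by positivity) hd0
    exact ⟨X, hcard, .inl hX⟩
  · obtain ⟨X, hcard, hX⟩ := hsparse.exists_half_le_card (by positivity) hd0
    exact ⟨X, hcard, .inr (by convert hX)⟩

end Rounding

/-! ### The number of rounds -/

section Numeric

lemma one_half_le_logb_three_halves : 1 / 2 ≤ Real.logb 2 (3 / 2) := by
  rw [Real.le_logb_iff_rpow_le one_lt_two (by norm_num), ← Real.sqrt_eq_rpow, Real.sqrt_le_left]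
    <;> norm_num

variable {d : ℝ}

lemma one_le_logb_one_div (hd0 : 0 < d) (hd : d ≤ 1 / 2) : 1 ≤ Real.logb 2 (1 / d) := by
  rw [Real.le_logb_iff_rpow_le one_lt_two (by positivity), Real.rpow_one, le_div_iff₀ hd0]
  linarith

lemma one_le_sq_mul_pow (hd0 : 0 < d) {m : ℕ} (hm : 4 * Real.logb 2 (1 / d) ≤ m) :
    1 ≤ d ^ 2 * (3 / 2) ^ m := by
  have hlog : Real.logb 2 (d ^ 2 * (3 / 2) ^ m) =
      m * Real.logb 2 (3 / 2) - 2 * Real.logb 2 (1 / d) := by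
    rw [Real.logb_mul (by positivity) (by positivity), Real.logb_pow, Real.logb_pow, one_div,
      Real.logb_inv]
    push_cast
    ring
  rw [← Real.logb_nonneg_iff one_lt_two (by positivity), hlog]
  nlinarith [one_half_le_logb_three_halves, m.cast_nonneg (α := ℝ)]

lemma two_rpow_le_pow_div_two (hd0 : 0 < d) (hd : d ≤ 1 / 2) {h : ℕ} (hh : 1 ≤ h) {t : ℕ}
    (ht : t ≤ 4 * Real.logb 2 (1 / d) - 1) :
    (2 : ℝ) ^ (-(15 * h * Real.logb 2 (1 / d) ^ 2)) ≤ ((3 / 16 * d) ^ h) ^ t / 2 := by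
  have hlogd := one_le_logb_one_div hd0 hd
  set L := Real.logb 2 (1 / d)
  have hlog : Real.logb 2 (((3 / 16 * d) ^ h) ^ t / 2) =
      -(h * (t * (3 - Real.logb 2 (3 / 2) + L)) + 1) := by
    have h8 : Real.logb 2 8 = 3 := by
      rw [show (8 : ℝ) = 2 ^ (3 : ℕ) by norm_num, Real.logb_pow]
      simp
    rw [show (3 / 16 * d : ℝ) = 3 / 2 / 8 / (1 / d) by field_simp; norm_num,
      Real.logb_div (by positivity) two_ne_zero, Real.logb_pow, Real.logb_pow,
      Real.logb_div (by positivity) (by positivity), Real.logb_div (by positivity) (by positivity),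
      h8, Real.logb_self_eq_one one_lt_two]
    ring
  rw [← Real.le_logb_iff_rpow_le one_lt_two (by positivity), hlog, neg_le_neg_iff]
  have hh' : (1 : ℝ) ≤ h := by exact_mod_cast hh
  calc h * (t * (3 - Real.logb 2 (3 / 2) + L)) + 1
      ≤ h * (t * (5 / 2 + L)) + h * 1 := by
        gcongr
        · linarith [one_half_le_logb_three_halves]
        · linarith
    _ ≤ h * ((4 * L - 1) * (5 / 2 + L)) + h * 1 := by gcongr
    _ = h * ((4 * L - 1) * (5 / 2 + L) + 1) := by ring
    _ ≤ h * (15 * L ^ 2) := by gcongr; nlinarith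
    _ = 15 * h * L ^ 2 := by ring

lemma exists_nat_bounds (hd0 : 0 < d) (hd : d ≤ 1 / 2) {h : ℕ} (hh : 1 ≤ h) :
    ∃ t : ℕ, 1 ≤ d ^ 2 * (3 / 2) ^ (t + 2) ∧
      (2 : ℝ) ^ (-(15 * h * Real.logb 2 (1 / d) ^ 2)) ≤ ((3 / 16 * d) ^ h) ^ t / 2 := by
  have hlogd := one_le_logb_one_div hd0 hd
  have hceil := Nat.le_ceil (4 * Real.logb 2 (1 / d))
  have hceil_lt := Nat.ceil_lt_add_one (a := 4 * Real.logb 2 (1 / d)) (by linarith)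
  have htwo : (2 : ℝ) ≤ ⌈4 * Real.logb 2 (1 / d)⌉₊ := by linarith
  obtain ⟨t, ht⟩ := Nat.exists_eq_add_of_le' (show 2 ≤ ⌈4 * Real.logb 2 (1 / d)⌉₊ by
    exact_mod_cast htwo)
  rw [ht] at hceil hceil_lt
  push_cast at hceil_lt
  exact ⟨t, one_le_sq_mul_pow hd0 hceil, two_rpow_le_pow_div_two hd0 hd hh (by linarith)⟩

end Numeric

end Rodl

theorem rodl_quantitative_general {V W : Type*} [Fintype V] [Fintype W] [DecidableEq V]
    {G : SimpleGraph V} [DecidableRel G.Adj] {H : SimpleGraph W} (hG : ¬ H ⊴ G) {d : ℝ}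
    (hd0 : 0 < d) (hd : d ≤ 1 / 2) :
    ∃ X : Finset V,
      (2 : ℝ) ^ (-(15 * (Fintype.card W : ℝ) * (Real.logb 2 (1 / d)) ^ 2)) * Fintype.card V ≤
        (X.card : ℝ) ∧
      ((∀ v ∈ X, ((X.filter (fun u => G.Adj v u)).card : ℝ) ≤ d * X.card) ∨
       (∀ v ∈ X, ((X.filter (fun u => Gᶜ.Adj v u)).card : ℝ) ≤ d * X.card)) := by
  have hW : Nonempty W := not_isEmpty_iff.1 fun _ => hG .of_isEmpty
  obtain ⟨t, hgrowth, hsize⟩ := Rodl.exists_nat_bounds hd0 hd (Fintype.card_pos (α := W))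
  obtain ⟨X, hcard, hX⟩ := Rodl.exists_forall_card_filter_adj_le_or hG hd0 hd hgrowth
  exact ⟨X, (mul_le_mul_of_nonneg_right hsize (Nat.cast_nonneg _)).trans hcard, by convert hX⟩

/-- Quantitative Rödl theorem (Fox–Sudakov): for every graph `H` on `h` vertices and every
`0 < d ≤ 1/2`, with `δ = 2 ^ (-15h(log(1/d))²)` (logs base 2), every `H`-free graph `G`
has a set `X` of at least `δ|V(G)|` vertices such that in one of `G[X]` or the complement
of `G` induced on `X`, every vertex has degree at most `d|X|`. -/
theorem rodl_quantitative (h : ℕ) (H : SimpleGraph (Fin h)) (d : ℝ)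
    (hd0 : 0 < d) (hd : d ≤ 1 / 2) :
    ∀ (n : ℕ) (G : SimpleGraph (Fin n)), ¬ Nonempty (H ↪g G) →
      ∃ X : Finset (Fin n),
        (2 : ℝ) ^ (-(15 * (h : ℝ) * (Real.logb 2 (1 / d)) ^ 2)) * n ≤ (X.card : ℝ) ∧
        ((∀ v ∈ X, ((X.filter (fun u => G.Adj v u)).card : ℝ) ≤ d * X.card) ∨
         (∀ v ∈ X, ((X.filter (fun u => Gᶜ.Adj v u)).card : ℝ) ≤ d * X.card)) := by
  intro n G hG
  simpa using rodl_quantitative_general (H := H) (G := G) hG hd0 hd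
end
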